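/- Let 0 < θ < 1, let 1 ≤ q₀, q₁ < ∞ be constants, let p₀ be a globally log-Hölder continuous exponent with 1 ≤ p₀⁻ ≤ p₀⁺ < ∞, and let α₀, α₁ : ℝ^n → ℝ be locally log-Hölder continuous. Define 1/p(·) := (1−θ)/p₀(·), 1/q := (1−θ)/q₀ + θ/q₁, and α(·) := (1−θ)α₀(·) + θα₁(·). Then the Calderón product (f^{α₀(·)}_{p₀(·),q₀})^{1−θ} · (f^{α₁(·)}_{∞,q₁})^{θ} equals f^{α(·)}_{p(·),q} with equivalent norms. -/

import Mathlib

open MeasureTheory ENNReal Real Set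

noncomputable section

/-- Euclidean space ℝ^n. -/
abbrev En (n : ℕ) := EuclideanSpace ℝ (Fin n)

/-- `g` is locally log-Hölder continuous with constant `c`. -/
def LocLogHolder {n : ℕ} (c : ℝ) (g : En n → ℝ) : Prop :=
  0 < c ∧ ∀ x y : En n, |g x - g y| ≤ c / Real.log (Real.exp 1 + 1 / ‖x - y‖)

/-- `g` is globally log-Hölder continuous with local constant `c`. -/
def GlobLogHolder {n : ℕ} (c : ℝ) (g : En n → ℝ) : Prop :=
  LocLogHolder c g ∧
    ∃ (gi cd : ℝ), 0 < cd ∧ ∀ x : En n, |g x - gi| ≤ cd / Real.log (Real.exp 1 + ‖x‖)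

/-- The kernel η_{v,h}(x) = 2^{nv} (1 + 2^v |x|)^{-h}. -/
def eta (n : ℕ) (v : ℕ) (h : ℝ) (x : En n) : ℝ :=
  (2 : ℝ) ^ (n * v) * (1 + (2 : ℝ) ^ v * ‖x‖) ^ (-h)

/-- The dyadic cube Q_{v,m}. -/
def dyadicCube (n : ℕ) (v : ℤ) (m : Fin n → ℤ) : Set (En n) :=
  {x | ∀ i, (m i : ℝ) ≤ (2 : ℝ) ^ v * x i ∧ (2 : ℝ) ^ v * x i < m i + 1}

/-- Luxemburg (quasi-)norm of an ℝ≥0∞-valued function with variable exponent `p`. -/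
def luxNorm {n : ℕ} (p : En n → ℝ) (F : En n → ℝ≥0∞) : ℝ≥0∞ :=
  sInf {c : ℝ≥0∞ | 0 < c ∧ ∫⁻ x, (F x / c) ^ p x ≤ 1}

/-- The mixed Lebesgue-sequence space norm ‖(F_v)_v‖_{L^{p(·)}(ℓ_{q(·)})}. -/
def mixedNorm {n : ℕ} (p q : En n → ℝ) (F : ℕ → En n → ℝ≥0∞) : ℝ≥0∞ :=
  luxNorm p fun x => (∑' v : ℕ, F v x ^ q x) ^ (1 / q x)

/-- The sequence space norm ‖λ‖_{f^{α(·)}_{p(·),q(·)}}. -/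
def seqNorm {n : ℕ} (α p q : En n → ℝ) (lam : ℕ → (Fin n → ℤ) → ℂ) : ℝ≥0∞ :=
  mixedNorm p q fun v x =>
    ∑' m : Fin n → ℤ,
      ENNReal.ofReal ((2 : ℝ) ^ ((v : ℝ) * (α x + n / 2)) * ‖lam v m‖) *
        (dyadicCube n (v : ℤ) m).indicator (fun _ => (1 : ℝ≥0∞)) x

/-- The sequence space norm ‖λ‖_{f^{α(·)}_{∞,q}}. -/
def seqNormInf {n : ℕ} (α : En n → ℝ) (q : ℝ) (lam : ℕ → (Fin n → ℤ) → ℂ) : ℝ≥0∞ :=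
  ⨆ (vQ : ℤ) (mQ : Fin n → ℤ),
    volume (dyadicCube n vQ mQ) ^ (-(1 / q)) *
      (∑' v : ℕ, if vQ ≤ (v : ℤ) then
          ∫⁻ x in dyadicCube n vQ mQ,
            ∑' m : Fin n → ℤ,
              ENNReal.ofReal ((2 : ℝ) ^ ((v : ℝ) * (α x + n / 2) * q) * ‖lam v m‖ ^ q) *
                (dyadicCube n (v : ℤ) m).indicator (fun _ => (1 : ℝ≥0∞)) x
        else 0) ^ (1 / q)

/-- The Calderón product (quasi-)norm associated to two sequence space norms. -/
def calderonNorm {n : ℕ} (N0 N1 : (ℕ → (Fin n → ℤ) → ℂ) → ℝ≥0∞) (θ : ℝ)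
    (lam : ℕ → (Fin n → ℤ) → ℂ) : ℝ≥0∞ :=
  sInf {M : ℝ≥0∞ | ∃ μ ν : ℕ → (Fin n → ℤ) → ℂ, N0 μ ≤ 1 ∧ N1 ν ≤ 1 ∧
    ∀ v m, ENNReal.ofReal ‖lam v m‖ ≤
      M * ENNReal.ofReal ‖μ v m‖ ^ (1 - θ) * ENNReal.ofReal ‖ν v m‖ ^ θ}



/-- Index of the dyadic cube of level `v` containing `x`. -/
def idx {n : ℕ} (v : ℤ) (x : En n) : Fin n → ℤ := fun i => ⌊(2 : ℝ) ^ v * x i⌋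

lemma mem_cube_iff {n : ℕ} {v : ℤ} {m : Fin n → ℤ} {x : En n} :
    x ∈ dyadicCube n v m ↔ idx v x = m := by
  simp only [dyadicCube, idx, Set.mem_ofPred_eq, funext_iff, Int.floor_eq_iff]

lemma measurable_idx {n : ℕ} (v : ℤ) : Measurable (idx v : En n → Fin n → ℤ) := by
  unfold idx
  refine measurable_pi_lambda _ fun i => ?_
  apply Int.measurable_floor.comp
  fun_prop

lemma measurableSet_cube {n : ℕ} (v : ℤ) (m : Fin n → ℤ) :
    MeasurableSet (dyadicCube n v m) := by
  have : dyadicCube n v m = (idx v) ⁻¹' {m} := by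
    ext x; simp [mem_cube_iff]
  rw [this]
  exact measurable_idx v (measurableSet_singleton m)

lemma idx_mono {n : ℕ} {u v : ℤ} (h : u ≤ v) {x y : En n} (hxy : idx v x = idx v y) :
    idx u x = idx u y := by
  obtain ⟨k, rfl⟩ := Int.exists_add_of_le h
  have key : ∀ z : En n, ∀ i, idx u z i = idx (u + k) z i / (2 ^ k : ℕ) := by
    intro z i
    simp only [idx]
    rw [← Int.floor_div_natCast]
    congr 1
    rw [zpow_add₀ (by norm_num)]
    push_cast
    rw [zpow_natCast]
    field_simp
  funext i
  rw [key, key, hxy]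

lemma vol_cube {n : ℕ} (v : ℤ) (m : Fin n → ℤ) :
    volume (dyadicCube n v m) = ENNReal.ofReal (((2 : ℝ) ^ (-v)) ^ n) := by
  have h2 : (0 : ℝ) < 2 ^ v := by positivity
  have hset : dyadicCube n v m = (WithLp.ofLp : En n → Fin n → ℝ) ⁻¹'
      (Set.pi Set.univ fun i => Set.Ico ((m i : ℝ) * 2 ^ (-v)) ((m i + 1 : ℝ) * 2 ^ (-v))) := by
    ext x
    simp only [dyadicCube, Set.mem_ofPred_eq, Set.mem_preimage, Set.mem_pi, Set.mem_univ,
      true_implies, Set.mem_Ico, zpow_neg]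
    refine forall_congr' fun i => ?_
    rw [← div_eq_mul_inv, ← div_eq_mul_inv, div_le_iff₀ h2, lt_div_iff₀ h2, mul_comm]
  rw [hset, (PiLp.volume_preserving_ofLp (Fin n)).measure_preimage
    (MeasurableSet.univ_pi fun i => measurableSet_Ico).nullMeasurableSet, Real.volume_pi_Ico]
  have : ∀ i, ((m i + 1 : ℝ) * 2 ^ (-v)) - ((m i : ℝ) * 2 ^ (-v)) = 2 ^ (-v) := fun i => by ring
  simp only [this]
  rw [Finset.prod_const, ENNReal.ofReal_pow (by positivity)]
  simp

lemma vol_cube_ne_zero {n : ℕ} (v : ℤ) (m : Fin n → ℤ) :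
    volume (dyadicCube n v m) ≠ 0 := by
  rw [vol_cube]
  simp only [ne_eq, ENNReal.ofReal_eq_zero, not_le]
  positivity

lemma vol_cube_ne_top {n : ℕ} (v : ℤ) (m : Fin n → ℤ) :
    volume (dyadicCube n v m) ≠ ∞ := by
  rw [vol_cube]; simp

/-- A corner of the cube. -/
def cn {n : ℕ} (v : ℤ) (m : Fin n → ℤ) : En n := WithLp.toLp 2 fun i => (m i : ℝ) * 2 ^ (-v)

lemma idx_cn {n : ℕ} (v : ℤ) (m : Fin n → ℤ) : idx v (cn v m) = m := by
  funext i
  simp only [idx, cn]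
  have : (2 : ℝ) ^ v * ((m i : ℝ) * 2 ^ (-v)) = m i := by
    rw [zpow_neg]; field_simp
  rw [this]; simp

lemma norm_sub_le_cube {n : ℕ} (v : ℤ) {x y : En n} (h : idx v x = idx v y) :
    ‖x - y‖ ≤ (n + 1) * 2 ^ (-v) := by
  have h2 : (0 : ℝ) < 2 ^ v := by positivity
  have h3 : (0 : ℝ) < 2 ^ (-v) := by positivity
  have hi : ∀ i, |x i - y i| ≤ 2 ^ (-v) := by
    intro i
    have := congrFun h i
    simp only [idx] at this
    have := Int.abs_sub_lt_one_of_floor_eq_floor this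
    rw [← mul_sub, abs_mul, abs_of_pos h2] at this
    rw [zpow_neg, ← one_div, le_div_iff₀ h2]
    linarith
  rw [EuclideanSpace.norm_eq]
  refine Real.sqrt_le_iff.2 ⟨by positivity, ?_⟩
  calc ∑ i, ‖(x - y) i‖ ^ 2 ≤ ∑ i : Fin n, ((2 : ℝ) ^ (-v)) ^ 2 := by
        refine Finset.sum_le_sum fun i _ => ?_
        have := hi i
        simp only [PiLp.sub_apply, Real.norm_eq_abs]
        gcongr
    _ = n * ((2 : ℝ) ^ (-v)) ^ 2 := by simp
    _ ≤ ((n + 1) * 2 ^ (-v)) ^ 2 := by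
        rw [mul_pow]
        gcongr
        have : (0 : ℝ) ≤ n := by positivity
        nlinarith

lemma one_le_logE {t : ℝ} (ht : 0 ≤ t) : 1 ≤ Real.log (Real.exp 1 + t) := by
  rw [Real.le_log_iff_exp_le (by positivity)]
  linarith

lemma LocLogHolder.cube {n : ℕ} {c : ℝ} {g : En n → ℝ} (hg : LocLogHolder c g) :
    ∃ C : ℝ, 0 ≤ C ∧ ∀ (v : ℕ) (x y : En n), idx (v : ℤ) x = idx v y →
      |g x - g y| * (v + 1) ≤ C := by
  obtain ⟨hc, hg⟩ := hg
  have hl2 : 0 < Real.log 2 := Real.log_pos (by norm_num)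
  have hln : 0 ≤ Real.log (n + 1) := Real.log_nonneg (by simp)
  refine ⟨c * (1 + (1 + Real.log (n + 1)) / Real.log 2), by positivity, fun v x y h => ?_⟩
  rcases eq_or_ne x y with rfl | hxy
  · simp; positivity
  have hd : 0 < ‖x - y‖ := norm_pos_iff.2 (sub_ne_zero.2 hxy)
  set d := ‖x - y‖
  have hdl : d ≤ (n + 1) * 2 ^ (-(v : ℤ)) := norm_sub_le_cube _ h
  set L := Real.log (Real.exp 1 + 1 / d) with hL
  have hL1 : 1 ≤ L := one_le_logE (by positivity)
  have h1 : (2 : ℝ) ^ v ≤ (n + 1) * (Real.exp 1 + 1 / d) := by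
    rw [zpow_neg, zpow_natCast, ← div_eq_mul_inv, le_div_iff₀ (by positivity)] at hdl
    have : (2 : ℝ) ^ v ≤ (n + 1) * (1 / d) := by
      rw [mul_one_div, le_div_iff₀ hd]; linarith
    refine this.trans ?_
    gcongr
    have := Real.exp_pos 1
    linarith
  have h2 : v * Real.log 2 ≤ Real.log (n + 1) + L := by
    have := Real.log_le_log (by positivity) h1
    rwa [Real.log_pow, Real.log_mul (by positivity) (by positivity)] at this
  have h3 : (v + 1 : ℝ) ≤ (1 + (1 + Real.log (n + 1)) / Real.log 2) * L := by
    have : (v : ℝ) ≤ (1 + Real.log (n + 1)) * L / Real.log 2 := by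
      rw [le_div_iff₀ hl2]
      nlinarith
    calc (v + 1 : ℝ) ≤ (1 + Real.log (n + 1)) * L / Real.log 2 + L := by linarith
      _ = _ := by ring
  calc |g x - g y| * (v + 1) ≤ c / L * ((1 + (1 + Real.log (n + 1)) / Real.log 2) * L) := by
        gcongr
        exact hg x y
    _ = _ := by field_simp

lemma LocLogHolder.continuous {n : ℕ} {c : ℝ} {g : En n → ℝ} (hg : LocLogHolder c g) :
    Continuous g := by
  obtain ⟨hc, hg⟩ := hg
  rw [continuous_iff_continuousAt]
  intro x
  rw [continuousAt_iff_punctured_nhds, tendsto_iff_norm_sub_tendsto_zero]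
  have h1 : Filter.Tendsto (fun y : En n => Real.exp 1 + 1 / ‖y - x‖) (nhdsWithin x {x}ᶜ)
      Filter.atTop := by
    apply Filter.tendsto_atTop_add_const_left
    simp only [one_div]
    exact (tendsto_norm_sub_self_nhdsNE x).inv_tendsto_nhdsGT_zero
  have h2 := (Real.tendsto_log_atTop.comp h1).const_div_atTop c
  exact squeeze_zero (fun y => norm_nonneg _) (fun y => hg y x) h2

lemma GlobLogHolder.cube {n : ℕ} {c : ℝ} {g : En n → ℝ} (hg : GlobLogHolder c g) :
    ∃ C : ℝ, 0 ≤ C ∧ ∀ (x y : En n), idx (0 : ℤ) x = idx 0 y →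
      |g x - g y| * Real.log (Real.exp 1 + ‖cn 0 (idx 0 x)‖) ≤ C := by
  obtain ⟨-, gi, cd, hcd, hg⟩ := hg
  have hln : 0 ≤ Real.log (n + 2) := Real.log_nonneg (by
    have : (0 : ℝ) ≤ n := by positivity
    linarith)
  have key : ∀ x : En n, |g x - gi| * Real.log (Real.exp 1 + ‖cn 0 (idx 0 x)‖) ≤
      cd * (1 + Real.log (n + 2)) := by
    intro x
    have h0 := norm_sub_le_cube 0 (idx_cn 0 (idx 0 x))
    simp only [neg_zero, zpow_zero, mul_one] at h0
    have h1 : ‖cn 0 (idx 0 x)‖ ≤ ‖x‖ + (n + 1) := by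
      have := norm_le_norm_add_norm_sub' (cn 0 (idx 0 x)) x
      linarith
    set L := Real.log (Real.exp 1 + ‖x‖) with hL
    have hL1 : 1 ≤ L := one_le_logE (norm_nonneg x)
    have h2 : Real.log (Real.exp 1 + ‖cn 0 (idx 0 x)‖) ≤ Real.log (n + 2) + L := by
      rw [hL, ← Real.log_mul (by positivity) (by positivity)]
      refine Real.log_le_log (by positivity) ?_
      have := Real.add_one_le_exp 1
      have := norm_nonneg x
      have : (0 : ℝ) ≤ n := by positivity
      nlinarith
    have h3 : Real.log (n + 2) + L ≤ (1 + Real.log (n + 2)) * L := by nlinarith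
    calc |g x - gi| * Real.log (Real.exp 1 + ‖cn 0 (idx 0 x)‖)
        ≤ cd / L * ((1 + Real.log (n + 2)) * L) := by
          exact mul_le_mul (hg x) (h2.trans h3)
            (le_trans zero_le_one (one_le_logE (norm_nonneg _))) (by positivity)
      _ = _ := by field_simp
  refine ⟨2 * (cd * (1 + Real.log (n + 2))), by positivity, fun x y h => ?_⟩
  have hx := key x
  have hy := key y
  rw [← h] at hy
  have : |g x - g y| ≤ |g x - gi| + |g y - gi| := by
    have := abs_sub_le (g x) gi (g y)
    rwa [abs_sub_comm gi] at this
  have hp := one_le_logE (norm_nonneg (cn 0 (idx 0 x)))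
  nlinarith

/-- Discretised weight. -/
def wt {n : ℕ} (α : En n → ℝ) (v : ℕ) (m : Fin n → ℤ) : ℝ :=
  (2 : ℝ) ^ ((v : ℝ) * (α (cn v m) + n / 2))

lemma wt_pos {n : ℕ} (α : En n → ℝ) (v : ℕ) (m : Fin n → ℤ) : 0 < wt α v m := by
  unfold wt; positivity

lemma LocLogHolder.wt_comp {n : ℕ} {c : ℝ} {α : En n → ℝ} (hg : LocLogHolder c α) :
    ∃ C : ℝ, 1 ≤ C ∧ ∀ (v : ℕ) (x : En n),
      (2 : ℝ) ^ ((v : ℝ) * (α x + n / 2)) ≤ C * wt α v (idx v x) ∧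
      wt α v (idx v x) ≤ C * (2 : ℝ) ^ ((v : ℝ) * (α x + n / 2)) := by
  obtain ⟨C, hC, h⟩ := hg.cube
  refine ⟨2 ^ C, Real.one_le_rpow (by norm_num) hC, fun v x => ?_⟩
  have h1 := h v x (cn v (idx v x)) (idx_cn _ _).symm
  have h2 : |α x - α (cn v (idx v x))| * v ≤ C := by
    refine le_trans ?_ h1
    gcongr; linarith
  have hv : (0 : ℝ) ≤ v := by positivity
  unfold wt
  rw [← Real.rpow_add (by norm_num), ← Real.rpow_add (by norm_num)]
  have h3 := le_abs_self (α x - α (cn v (idx v x)))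
  have h4 := neg_abs_le (α x - α (cn v (idx v x)))
  constructor
  · apply Real.rpow_le_rpow_of_exponent_le (by norm_num)
    nlinarith
  · apply Real.rpow_le_rpow_of_exponent_le (by norm_num)
    nlinarith


lemma pow_sub_le_aux {s x y : ℝ} (hs : 0 < s) (hx : 0 < x) (hy : 0 ≤ y) (hyx : y ≤ x) :
    x ^ s - y ^ s ≤ max 1 s * (x ^ (s - 1) * (x - y)) := by
  have hxs : 0 < x ^ s := Real.rpow_pos_of_pos hx s
  have e1 : x ^ (s - 1) * (x - y) = x ^ s * (1 - y / x) := by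
    rw [Real.rpow_sub_one hx.ne']; field_simp
  have e2 : y ^ s = x ^ s * (y / x) ^ s := by
    rw [Real.div_rpow hy hx.le]; field_simp
  have hr0 : 0 ≤ y / x := by positivity
  have hr1 : y / x ≤ 1 := by rw [div_le_one hx]; exact hyx
  rw [e1, e2]
  have key : 1 - (y / x) ^ s ≤ max 1 s * (1 - y / x) := by
    rcases le_total s 1 with h | h
    · rw [max_eq_left h]
      have := Real.rpow_le_rpow_of_exponent_ge' hr0 hr1 hs.le h
      rw [Real.rpow_one] at this
      linarith
    · rw [max_eq_right h]
      have := one_add_mul_self_le_rpow_one_add (s := y / x - 1) (by linarith) h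
      have e3 : 1 + (y / x - 1) = y / x := by ring
      rw [e3] at this
      linarith
  nlinarith

lemma le_pow_sub_aux {s x y : ℝ} (hs : 0 < s) (hs1 : s ≤ 1) (hx : 0 < x) (hy : 0 ≤ y)
    (hyx : y ≤ x) :
    x ^ (s - 1) * (x - y) ≤ 1 / s * (x ^ s - y ^ s) := by
  have hxs : 0 < x ^ s := Real.rpow_pos_of_pos hx s
  have e1 : x ^ (s - 1) * (x - y) = x ^ s * (1 - y / x) := by
    rw [Real.rpow_sub_one hx.ne']; field_simp
  have e2 : y ^ s = x ^ s * (y / x) ^ s := by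
    rw [Real.div_rpow hy hx.le]; field_simp
  have hr0 : 0 ≤ y / x := by positivity
  have hr1 : y / x ≤ 1 := by rw [div_le_one hx]; exact hyx
  rw [e1, e2]
  have key : s * (1 - y / x) ≤ 1 - (y / x) ^ s := by
    have := rpow_one_add_le_one_add_mul_self (s := y / x - 1) (by linarith) hs.le hs1
    have e3 : 1 + (y / x - 1) = y / x := by ring
    rw [e3] at this
    linarith
  rw [one_div, ← div_eq_inv_mul, le_div_iff₀ hs]
  nlinarith

lemma telescope1 {s : ℝ} (hs : 0 < s) {β : ℕ → ℝ} (hβ : ∀ v, 0 ≤ β v) (hβ0 : 0 < β 0) (N : ℕ) :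
    (∑ u ∈ Finset.range (N + 1), β u) ^ s ≤
      max 1 s * ∑ v ∈ Finset.range (N + 1), β v * (∑ u ∈ Finset.range (v + 1), β u) ^ (s - 1) := by
  have hS : ∀ v, 0 < ∑ u ∈ Finset.range (v + 1), β u := fun v =>
    lt_of_lt_of_le hβ0 (Finset.single_le_sum (fun i _ => hβ i) (by simp))
  induction N with
  | zero =>
    simp only [zero_add, Finset.range_one, Finset.sum_singleton]
    have : β 0 * β 0 ^ (s - 1) = β 0 ^ s := by
      rw [Real.rpow_sub_one hβ0.ne']; field_simp
    rw [this]
    have h1 : 1 ≤ max 1 s := le_max_left _ _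
    have h2 : 0 ≤ β 0 ^ s := by positivity
    nlinarith
  | succ N ih =>
    rw [Finset.sum_range_succ (fun v => β v * (∑ u ∈ Finset.range (v + 1), β u) ^ (s - 1)), mul_add]
    have h := pow_sub_le_aux hs (hS (N + 1)) (hS N).le (by
      rw [Finset.sum_range_succ _ (N + 1)]; linarith [hβ (N + 1)])
    have e : (∑ u ∈ Finset.range (N + 1 + 1), β u) - ∑ u ∈ Finset.range (N + 1), β u = β (N + 1) := by
      rw [Finset.sum_range_succ _ (N + 1)]; ring
    rw [e, mul_comm _ (β (N + 1))] at h
    linarith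

lemma telescope2 {s : ℝ} (hs : 0 < s) (hs1 : s ≤ 1) {β γ : ℕ → ℝ} (hγ : ∀ v, 0 ≤ γ v)
    (hγβ : ∀ v, γ v ≤ β v) (N : ℕ) :
    ∑ v ∈ Finset.range N, γ v * (∑ u ∈ Finset.range (v + 1), β u) ^ (s - 1) ≤
      1 / s * (∑ u ∈ Finset.range N, γ u) ^ s := by
  induction N with
  | zero => simp [Real.zero_rpow hs.ne']
  | succ N ih =>
    rw [Finset.sum_range_succ]
    have hR : 0 ≤ ∑ u ∈ Finset.range N, γ u := Finset.sum_nonneg fun i _ => hγ i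
    rcases eq_or_lt_of_le (hγ N) with h0 | h0
    · rw [Finset.sum_range_succ γ N, ← h0]; simpa using ih
    · have hR' : 0 < ∑ u ∈ Finset.range (N + 1), γ u := by
        rw [Finset.sum_range_succ]; linarith
      have h1 : (∑ u ∈ Finset.range (N + 1), β u) ^ (s - 1) ≤
          (∑ u ∈ Finset.range (N + 1), γ u) ^ (s - 1) :=
        Real.rpow_le_rpow_of_nonpos hR' (Finset.sum_le_sum fun i _ => hγβ i) (by linarith)
      have h2 := le_pow_sub_aux hs hs1 hR' hR (by rw [Finset.sum_range_succ γ N]; linarith)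
      have e : (∑ u ∈ Finset.range (N + 1), γ u) - ∑ u ∈ Finset.range N, γ u = γ N := by
        rw [Finset.sum_range_succ]; ring
      rw [e, mul_comm _ (γ N)] at h2
      have h3 := mul_le_mul_of_nonneg_left h1 h0.le
      linarith

lemma telescope3 {s sm sp δ : ℝ} (hsm : 0 < sm) (h1 : sm ≤ s) (h2 : s ≤ sp)
    (hδ : 0 < δ) (hδ1 : δ ≤ 1) {β γ : ℕ → ℝ} (hγ : ∀ v, 0 ≤ γ v)
    (hγβ : ∀ v, γ v ≤ β v) (hβ0 : 0 < β 0) (N : ℕ) :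
    ∑ v ∈ Finset.range (N + 1), γ v * (∑ u ∈ Finset.range (v + 1), β u) ^ (s - 1) ≤
      δ * (∑ u ∈ Finset.range (N + 1), β u) ^ s +
        (1 / sm + δ ^ (-sp)) * (∑ u ∈ Finset.range (N + 1), γ u) ^ s := by
  have hs : 0 < s := hsm.trans_le h1
  have hβ : ∀ v, 0 ≤ β v := fun v => (hγ v).trans (hγβ v)
  have hS : ∀ v, 0 < ∑ u ∈ Finset.range (v + 1), β u := fun v =>
    lt_of_lt_of_le hβ0 (Finset.single_le_sum (fun i _ => hβ i) (by simp))
  have hR : 0 ≤ ∑ u ∈ Finset.range (N + 1), γ u := Finset.sum_nonneg fun i _ => hγ i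
  have hRs := Real.rpow_nonneg hR s
  have hSs := Real.rpow_nonneg (hS N).le s
  have hδs : 0 < δ ^ (-sp) := Real.rpow_pos_of_pos hδ _
  have hism : 0 < 1 / sm := by positivity
  rcases le_total s 1 with h | h
  · refine (telescope2 hs h hγ hγβ (N + 1)).trans ?_
    have : 1 / s ≤ 1 / sm := one_div_le_one_div_of_le hsm h1
    nlinarith
  · have hA : ∑ v ∈ Finset.range (N + 1), γ v * (∑ u ∈ Finset.range (v + 1), β u) ^ (s - 1) ≤
        (∑ u ∈ Finset.range (N + 1), γ u) * (∑ u ∈ Finset.range (N + 1), β u) ^ (s - 1) := by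
      rw [Finset.sum_mul]
      refine Finset.sum_le_sum fun v hv => ?_
      have hv' : v + 1 ≤ N + 1 := by simpa [Nat.lt_iff_add_one_le] using hv
      refine mul_le_mul_of_nonneg_left ?_ (hγ v)
      refine Real.rpow_le_rpow (hS v).le ?_ (by linarith)
      exact Finset.sum_le_sum_of_subset_of_nonneg (Finset.range_mono hv') fun i _ _ => hβ i
    refine hA.trans ?_
    set S := ∑ u ∈ Finset.range (N + 1), β u
    set R := ∑ u ∈ Finset.range (N + 1), γ u
    have hSpos : 0 < S := hS N
    have eS : S * S ^ (s - 1) = S ^ s := by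
      rw [Real.rpow_sub_one hSpos.ne']; field_simp
    have hS1 : 0 ≤ S ^ (s - 1) := Real.rpow_nonneg hSpos.le _
    rcases le_total R (δ * S) with hRS | hRS
    · have : R * S ^ (s - 1) ≤ δ * S ^ s := by
        rw [← eS, ← mul_assoc]
        gcongr
      nlinarith
    · have hRpos : 0 < R := lt_of_lt_of_le (by positivity) hRS
      have hSR : S ≤ R / δ := by rw [le_div_iff₀ hδ]; linarith
      have h3 : S ^ (s - 1) ≤ (R / δ) ^ (s - 1) := Real.rpow_le_rpow hSpos.le hSR (by linarith)
      have h4 : R * (R / δ) ^ (s - 1) = δ ^ (-(s - 1)) * R ^ s := by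
        rw [Real.div_rpow hRpos.le hδ.le, Real.rpow_neg hδ.le, Real.rpow_sub_one hRpos.ne']
        field_simp
      have h5 : δ ^ (-(s - 1)) ≤ δ ^ (-sp) :=
        Real.rpow_le_rpow_of_exponent_ge hδ hδ1 (by linarith)
      have h6 : R * S ^ (s - 1) ≤ δ ^ (-sp) * R ^ s := by
        calc R * S ^ (s - 1) ≤ R * (R / δ) ^ (s - 1) := by gcongr
          _ = _ := h4
          _ ≤ _ := by gcongr
      nlinarith

lemma lintegral_eq_tsum_cube {n : ℕ} (v : ℤ) (h : En n → ℝ≥0∞) {E : Set (En n)}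
    (hE : MeasurableSet E) :
    ∫⁻ x in E, h x = ∑' m, ∫⁻ x in dyadicCube n v m ∩ E, h x := by
  rw [← lintegral_iUnion]
  · congr 2
    rw [← Set.iUnion_inter]
    ext x
    simp [mem_cube_iff]
  · exact fun m => (measurableSet_cube v m).inter hE
  · intro a b hab
    refine Set.disjoint_left.2 fun x hx hy => hab ?_
    exact (mem_cube_iff.1 hx.1).symm.trans (mem_cube_iff.1 hy.1)

lemma avg_compare {n : ℕ} (v : ℤ) (h : En n → ℝ≥0∞) {B : ℝ≥0∞} (hBt : B ≠ ∞)
    (hB : ∀ x y, idx v x = idx v y → h x ≤ B * h y) {E : Set (En n)} (hE : MeasurableSet E)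
    (hd : ∀ m, volume (dyadicCube n v m) ≤ 2 * volume (dyadicCube n v m ∩ E)) :
    ∫⁻ x, h x ≤ 2 * B * ∫⁻ x in E, h x := by
  rw [← setLIntegral_univ, lintegral_eq_tsum_cube v h MeasurableSet.univ,
    lintegral_eq_tsum_cube v h hE, ← ENNReal.tsum_mul_left]
  refine ENNReal.tsum_le_tsum fun m => ?_
  rw [Set.inter_univ]
  set Q := dyadicCube n v m
  have hQ : MeasurableSet Q := measurableSet_cube v m
  have hQE0 : volume (Q ∩ E) ≠ 0 := by
    intro h0
    have := hd m
    rw [h0, mul_zero] at this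
    exact vol_cube_ne_zero v m (le_antisymm this (zero_le))
  have hQEt : volume (Q ∩ E) ≠ ∞ :=
    ne_top_of_le_ne_top (vol_cube_ne_top v m) (measure_mono Set.inter_subset_left)
  have h1 : ∀ y ∈ Q ∩ E, ∫⁻ x in Q, h x ≤ B * volume Q * h y := by
    intro y hy
    calc ∫⁻ x in Q, h x ≤ ∫⁻ x in Q, B * h y := by
          refine setLIntegral_mono' hQ fun x hx => hB x y ?_
          rw [mem_cube_iff.1 hx, mem_cube_iff.1 hy.1]
      _ = B * volume Q * h y := by rw [setLIntegral_const]; ring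
  have h2 : volume (Q ∩ E) * ∫⁻ x in Q, h x ≤ volume (Q ∩ E) * (2 * B * ∫⁻ x in Q ∩ E, h x) := by
    calc volume (Q ∩ E) * ∫⁻ x in Q, h x = ∫⁻ y in Q ∩ E, (∫⁻ x in Q, h x) := by
          rw [setLIntegral_const, mul_comm]
      _ ≤ ∫⁻ y in Q ∩ E, B * volume Q * h y := setLIntegral_mono' (hQ.inter hE) h1
      _ = B * volume Q * ∫⁻ y in Q ∩ E, h y :=
          lintegral_const_mul' _ _ (ENNReal.mul_ne_top hBt (vol_cube_ne_top v m))
      _ ≤ B * (2 * volume (Q ∩ E)) * ∫⁻ y in Q ∩ E, h y := by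
          gcongr
          exact hd m
      _ = _ := by ring
  exact (ENNReal.mul_le_mul_iff_right hQE0 hQEt).1 h2

lemma markov_cube {n : ℕ} (v : ℤ) (m : Fin n → ℤ) {f : En n → ℝ≥0∞} (hf : Measurable f)
    {a : ℝ≥0∞} (ha : ∫⁻ x in dyadicCube n v m, f x ≤ a * volume (dyadicCube n v m)) :
    volume (dyadicCube n v m) ≤ 2 * volume (dyadicCube n v m ∩ {x | f x ≤ 2 * a}) := by
  set Q := dyadicCube n v m
  have hQ : MeasurableSet Q := measurableSet_cube v m
  have hQt := vol_cube_ne_top v m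
  have hA : MeasurableSet {x | f x ≤ 2 * a} := measurableSet_le hf measurable_const
  have hsplit := measure_inter_add_sdiff (μ := volume) Q hA
  suffices h : 2 * volume (Q \ {x | f x ≤ 2 * a}) ≤ volume Q by
    have hfin : volume (Q \ {x | f x ≤ 2 * a}) ≠ ∞ :=
      ne_top_of_le_ne_top hQt (measure_mono Set.sdiff_subset)
    rw [← hsplit, two_mul (volume _)] at h
    have h' := ENNReal.le_of_add_le_add_right hfin h
    rw [← hsplit, two_mul (volume _)]
    exact add_le_add le_rfl h'
  rcases eq_or_ne a ∞ with rfl | hat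
  · have : Q \ {x | f x ≤ 2 * ∞} = ∅ := by ext x; simp [ENNReal.mul_top]
    rw [this]; simp
  rcases eq_or_ne a 0 with rfl | ha0
  · rw [zero_mul, nonpos_iff_eq_zero, lintegral_eq_zero_iff hf, Filter.EventuallyEq,
      ae_restrict_iff' hQ] at ha
    have : volume (Q \ {x | f x ≤ 2 * 0}) = 0 := by
      refine measure_mono_null ?_ ha
      intro x hx
      simp only [mul_zero, nonpos_iff_eq_zero, Set.mem_sdiff, Set.mem_ofPred_eq] at hx
      simp [hx.1, hx.2]
    rw [this]; simp
  have h1 : a * (2 * volume (Q \ {x | f x ≤ 2 * a})) ≤ a * volume Q := by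
    calc a * (2 * volume (Q \ {x | f x ≤ 2 * a}))
        = ∫⁻ x in Q \ {x | f x ≤ 2 * a}, 2 * a := by rw [setLIntegral_const]; ring
      _ ≤ ∫⁻ x in Q \ {x | f x ≤ 2 * a}, f x := by
          refine setLIntegral_mono' (hQ.diff hA) fun x hx => ?_
          have := hx.2
          simp only [Set.mem_ofPred_eq, not_le] at this
          exact this.le
      _ ≤ ∫⁻ x in Q, f x := lintegral_mono_set Set.sdiff_subset
      _ ≤ _ := ha
  exact (ENNReal.mul_le_mul_iff_right ha0 hat).1 h1


/-- Partial sums of the coefficients along the dyadic cubes containing `x`. -/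
def SS {n : ℕ} (b : ℕ → (Fin n → ℤ) → ℝ) (N : ℕ) (x : En n) : ℝ :=
  ∑ u ∈ Finset.range (N + 1), b u (idx u x)

/-- Partial sums restricted to the sets `E`. -/
def RR {n : ℕ} (b : ℕ → (Fin n → ℤ) → ℝ) (E : ℕ → Set (En n)) (N : ℕ) (x : En n) : ℝ :=
  ∑ u ∈ Finset.range (N + 1), (E u).indicator (fun y => b u (idx u y)) x

lemma measurable_bidx {n : ℕ} {β : Type*} [MeasurableSpace β] (f : (Fin n → ℤ) → β) (v : ℤ) :
    Measurable fun x : En n => f (idx v x) :=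
  (measurable_of_countable f).comp (measurable_idx v)

lemma SS_congr {n : ℕ} (b : ℕ → (Fin n → ℤ) → ℝ) {N : ℕ} {x y : En n}
    (h : idx (N : ℤ) x = idx N y) : SS b N x = SS b N y := by
  unfold SS
  refine Finset.sum_congr rfl fun u hu => ?_
  rw [idx_mono (u := u) (v := N) _ h]
  have := Finset.mem_range.1 hu
  omega

lemma measurable_SS {n : ℕ} (b : ℕ → (Fin n → ℤ) → ℝ) (N : ℕ) : Measurable (SS b N) := by
  unfold SS
  exact Finset.measurable_sum _ fun u _ => measurable_bidx _ _

lemma measurable_RR {n : ℕ} (b : ℕ → (Fin n → ℤ) → ℝ) {E : ℕ → Set (En n)}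
    (hE : ∀ v, MeasurableSet (E v)) (N : ℕ) : Measurable (RR b E N) := by
  unfold RR
  exact Finset.measurable_sum _ fun u _ => (measurable_bidx _ _).indicator (hE u)

lemma core_unit {n : ℕ} {s : En n → ℝ} (hs : Measurable s) {sm sp B : ℝ} (hsm : 0 < sm)
    (hsb : ∀ x, sm ≤ s x ∧ s x ≤ sp) (hB1 : 1 ≤ B)
    {b : ℕ → (Fin n → ℤ) → ℝ} (hb : ∀ v m, 0 ≤ b v m) (hb0 : ∀ m, 0 < b 0 m)
    {H : ℕ → ℝ} (hH : ∀ v m, b v m ≤ H v)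
    {E : ℕ → Set (En n)} (hE : ∀ v, MeasurableSet (E v))
    (hd : ∀ (v : ℕ) m, volume (dyadicCube n v m) ≤ 2 * volume (dyadicCube n v m ∩ E v))
    (hB : ∀ (v : ℕ) (x y : En n), idx (v : ℤ) x = idx v y →
      SS b v x ^ (s x - 1) ≤ B * SS b v x ^ (s y - 1))
    (m0 : Fin n → ℤ) (N : ℕ) :
    ∫⁻ x in dyadicCube n 0 m0, ENNReal.ofReal (SS b N x ^ s x) ≤
      ENNReal.ofReal (4 * B * max 1 sp * (1 / sm + (1 / (4 * B * max 1 sp)) ^ (-sp))) *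
      ∫⁻ x in dyadicCube n 0 m0, ENNReal.ofReal (RR b E N x ^ s x) := by
  set σ := max 1 sp with hσ
  have hσ1 : 1 ≤ σ := le_max_left _ _
  set δ := 1 / (4 * B * σ) with hδ
  have hδ0 : 0 < δ := by positivity
  have hδ1 : δ ≤ 1 := by
    rw [hδ, div_le_one (by positivity)]; nlinarith
  set Cd := 1 / sm + δ ^ (-sp) with hCd
  have hCd0 : 0 < Cd := by positivity
  set Q := dyadicCube n 0 m0 with hQd
  have hQ : MeasurableSet Q := measurableSet_cube 0 m0
  have hSpos : ∀ v x, 0 < SS b v x := fun v x =>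
    lt_of_lt_of_le (hb0 (idx 0 x))
      (Finset.single_le_sum (f := fun u : ℕ => b u (idx u x)) (fun i _ => hb _ _)
        (Finset.mem_range.2 (Nat.succ_pos v)))
  have hspos : ∀ x, 0 < s x := fun x => hsm.trans_le (hsb x).1
  have hR0 : ∀ v x, 0 ≤ RR b E v x := fun v x =>
    Finset.sum_nonneg fun i _ => Set.indicator_nonneg (fun y _ => hb _ _) x
  set t : ℕ → En n → ℝ := fun v x => b v (idx v x) * SS b v x ^ (s x - 1) with ht
  have ht0 : ∀ v x, 0 ≤ t v x := fun v x =>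
    mul_nonneg (hb _ _) (Real.rpow_nonneg (hSpos v x).le _)
  have htm : ∀ v, Measurable (t v) := fun v =>
    (measurable_bidx _ _).mul ((measurable_SS b v).pow (hs.sub_const 1))
  set X := ∫⁻ x in Q, ENNReal.ofReal (SS b N x ^ s x) with hX
  set Y := ∫⁻ x in Q, ENNReal.ofReal (RR b E N x ^ s x) with hY
  have hXt : X ≠ ∞ := by
    set h := max 1 (∑ u ∈ Finset.range (N + 1), H u)
    have hle : X ≤ ∫⁻ x in Q, ENNReal.ofReal (h ^ sp) := by
      refine setLIntegral_mono' hQ fun x _ => ENNReal.ofReal_le_ofReal ?_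
      calc SS b N x ^ s x ≤ h ^ s x := by
            refine Real.rpow_le_rpow (hSpos N x).le ?_ (hspos x).le
            exact (Finset.sum_le_sum fun i _ => hH _ _).trans (le_max_right _ _)
        _ ≤ h ^ sp := Real.rpow_le_rpow_of_exponent_le (le_max_left _ _) (hsb x).2
    refine ne_top_of_le_ne_top ?_ hle
    rw [setLIntegral_const]
    exact ENNReal.mul_ne_top ENNReal.ofReal_ne_top (vol_cube_ne_top _ _)
  have step1 : X ≤ ENNReal.ofReal σ * ∑ v ∈ Finset.range (N + 1), ∫⁻ x in Q, ENNReal.ofReal (t v x) := by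
    rw [← lintegral_finsetSum _ fun v _ => (htm v).ennreal_ofReal,
      ← lintegral_const_mul _ (Finset.measurable_fun_sum _ fun v _ => (htm v).ennreal_ofReal)]
    refine lintegral_mono fun x => ?_
    rw [← ENNReal.ofReal_sum_of_nonneg fun v _ => ht0 v x, ← ENNReal.ofReal_mul (by positivity)]
    refine ENNReal.ofReal_le_ofReal ?_
    refine (telescope1 (hspos x) (β := fun u : ℕ => b u (idx u x)) (fun v => hb _ _) (hb0 _) N).trans ?_
    refine mul_le_mul_of_nonneg_right (max_le_max le_rfl (hsb x).2) ?_
    exact Finset.sum_nonneg fun v _ => ht0 v x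
  have step2 : ∀ v : ℕ, ∫⁻ x in Q, ENNReal.ofReal (t v x) ≤
      2 * ENNReal.ofReal B * ∫⁻ x in Q, (E v).indicator (fun x => ENNReal.ofReal (t v x)) x := by
    intro v
    have := avg_compare (v : ℤ) (Q.indicator fun x => ENNReal.ofReal (t v x))
      (B := ENNReal.ofReal B) ENNReal.ofReal_ne_top ?_ (hE v) (hd v)
    · rw [lintegral_indicator hQ] at this
      refine this.trans (le_of_eq ?_)
      congr 1
      rw [← lintegral_indicator (hE v), ← lintegral_indicator hQ, Set.indicator_indicator,
        Set.indicator_indicator, Set.inter_comm]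
    · intro x y hxy
      by_cases hx : x ∈ Q
      · have hy : y ∈ Q := by
          rw [mem_cube_iff] at hx ⊢
          rw [← hx]
          exact (idx_mono (by positivity) hxy).symm
        rw [Set.indicator_of_mem hx, Set.indicator_of_mem hy, ← ENNReal.ofReal_mul (by positivity)]
        refine ENNReal.ofReal_le_ofReal ?_
        simp only [ht]
        rw [← SS_congr b hxy, ← hxy]
        have := mul_le_mul_of_nonneg_left (hB v x y hxy) (hb v (idx v x))
        linarith
      · rw [Set.indicator_of_notMem hx]; exact zero_le
  have step3 : ∑ v ∈ Finset.range (N + 1),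
      ∫⁻ x in Q, (E v).indicator (fun x => ENNReal.ofReal (t v x)) x ≤
      ENNReal.ofReal δ * X + ENNReal.ofReal Cd * Y := by
    rw [← lintegral_finsetSum _ fun v _ => (htm v).ennreal_ofReal.indicator (hE v), hX, hY,
      ← lintegral_const_mul _ ((measurable_SS b N).pow hs).ennreal_ofReal,
      ← lintegral_const_mul _ ((measurable_RR b hE N).pow hs).ennreal_ofReal,
      ← lintegral_add_left (((measurable_SS b N).pow hs).ennreal_ofReal.const_mul _)]
    refine lintegral_mono fun x => ?_
    have h1 := telescope3 hsm (hsb x).1 (hsb x).2 hδ0 hδ1 (β := fun u : ℕ => b u (idx u x))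
      (γ := fun u => (E u).indicator (fun y => b u (idx u y)) x)
      (fun v => Set.indicator_nonneg (fun y _ => hb _ _) x)
      (fun v => Set.indicator_le_self' (fun y _ => hb _ _) x) (hb0 _) N
    have e : ∀ v, (E v).indicator (fun x => ENNReal.ofReal (t v x)) x =
        ENNReal.ofReal ((E v).indicator (fun y => b v (idx v y)) x * SS b v x ^ (s x - 1)) := by
      intro v
      by_cases hx : x ∈ E v
      · simp [hx, ht]
      · simp [hx]
    simp only [e]
    rw [← ENNReal.ofReal_sum_of_nonneg, ← ENNReal.ofReal_mul hδ0.le, ← ENNReal.ofReal_mul hCd0.le,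
      ← ENNReal.ofReal_add]
    · exact ENNReal.ofReal_le_ofReal h1
    · exact mul_nonneg hδ0.le (Real.rpow_nonneg (hSpos N x).le _)
    · exact mul_nonneg hCd0.le (Real.rpow_nonneg (hR0 N x) _)
    · exact fun v _ => mul_nonneg (Set.indicator_nonneg (fun y _ => hb _ _) x)
        (Real.rpow_nonneg (hSpos v x).le _)
  have step4 : X ≤ ENNReal.ofReal (2 * B * σ) * (ENNReal.ofReal δ * X + ENNReal.ofReal Cd * Y) := by
    calc X ≤ ENNReal.ofReal σ * ∑ v ∈ Finset.range (N + 1), ∫⁻ x in Q, ENNReal.ofReal (t v x) := step1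
      _ ≤ ENNReal.ofReal σ * ∑ v ∈ Finset.range (N + 1), 2 * ENNReal.ofReal B *
          ∫⁻ x in Q, (E v).indicator (fun x => ENNReal.ofReal (t v x)) x := by
          gcongr with v hv
          exact step2 v
      _ = ENNReal.ofReal (2 * B * σ) * ∑ v ∈ Finset.range (N + 1),
          ∫⁻ x in Q, (E v).indicator (fun x => ENNReal.ofReal (t v x)) x := by
          rw [← Finset.mul_sum, ENNReal.ofReal_mul (by positivity), ENNReal.ofReal_mul (by positivity)]
          simp only [ENNReal.ofReal_ofNat]
          ring
      _ ≤ _ := by gcongr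
  by_cases hYt : Y = ∞
  · rw [hYt, ENNReal.mul_top]
    · exact le_top
    · simp only [ne_eq, ENNReal.ofReal_eq_zero, not_le]; positivity
  rw [← ENNReal.ofReal_toReal hXt, ← ENNReal.ofReal_toReal hYt] at step4 ⊢
  have hX0 : 0 ≤ X.toReal := ENNReal.toReal_nonneg
  have hY0 : 0 ≤ Y.toReal := ENNReal.toReal_nonneg
  rw [← ENNReal.ofReal_mul (by positivity), ← ENNReal.ofReal_mul (by positivity),
    ← ENNReal.ofReal_add (by positivity) (by positivity), ← ENNReal.ofReal_mul (by positivity),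
    ENNReal.ofReal_le_ofReal_iff (by positivity)] at step4
  rw [← ENNReal.ofReal_mul (by positivity)]
  refine ENNReal.ofReal_le_ofReal ?_
  have : 2 * B * σ * (δ * X.toReal + Cd * Y.toReal) = X.toReal / 2 + 2 * B * σ * Cd * Y.toReal := by
    rw [hδ]; field_simp; ring
  rw [this] at step4
  linarith

lemma core_global {n : ℕ} {s : En n → ℝ} (hs : Measurable s) {sm sp B : ℝ} (hsm : 0 < sm)
    (hsb : ∀ x, sm ≤ s x ∧ s x ≤ sp) (hB1 : 1 ≤ B)
    {b : ℕ → (Fin n → ℤ) → ℝ} (hb : ∀ v m, 0 ≤ b v m) (hb0 : ∀ m, 0 < b 0 m)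
    {H : ℕ → ℝ} (hH : ∀ v m, b v m ≤ H v)
    {E : ℕ → Set (En n)} (hE : ∀ v, MeasurableSet (E v))
    (hd : ∀ (v : ℕ) m, volume (dyadicCube n v m) ≤ 2 * volume (dyadicCube n v m ∩ E v))
    (hB : ∀ (v : ℕ) (x y : En n), idx (v : ℤ) x = idx v y →
      SS b v x ^ (s x - 1) ≤ B * SS b v x ^ (s y - 1)) :
    ∫⁻ x, (∑' v : ℕ, ENNReal.ofReal (b v (idx v x))) ^ s x ≤
      ENNReal.ofReal (4 * B * max 1 sp * (1 / sm + (1 / (4 * B * max 1 sp)) ^ (-sp))) *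
      ∫⁻ x, (∑' v : ℕ, (E v).indicator (fun y => ENNReal.ofReal (b v (idx v y))) x) ^ s x := by
  have hspos : ∀ x, 0 < s x := fun x => hsm.trans_le (hsb x).1
  have eS : ∀ N x, ENNReal.ofReal (SS b N x ^ s x) =
      (∑ v ∈ Finset.range (N + 1), ENNReal.ofReal (b v (idx v x))) ^ s x := by
    intro N x
    unfold SS
    rw [← ENNReal.ofReal_rpow_of_nonneg (Finset.sum_nonneg fun i _ => hb _ _) (hspos x).le,
      ENNReal.ofReal_sum_of_nonneg fun i _ => hb _ _]
  have eR : ∀ N x, ENNReal.ofReal (RR b E N x ^ s x) =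
      (∑ v ∈ Finset.range (N + 1), (E v).indicator (fun y => ENNReal.ofReal (b v (idx v y))) x) ^ s x := by
    intro N x
    unfold RR
    rw [← ENNReal.ofReal_rpow_of_nonneg (Finset.sum_nonneg fun i _ =>
      Set.indicator_nonneg (fun y _ => hb _ _) x) (hspos x).le,
      ENNReal.ofReal_sum_of_nonneg fun i _ => Set.indicator_nonneg (fun y _ => hb _ _) x]
    congr 1
    refine Finset.sum_congr rfl fun v _ => ?_
    by_cases hx : x ∈ E v <;> simp [hx]
  have hlim : Filter.Tendsto (fun N => ∫⁻ x, ENNReal.ofReal (SS b N x ^ s x)) Filter.atTop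
      (nhds (∫⁻ x, (∑' v : ℕ, ENNReal.ofReal (b v (idx v x))) ^ s x)) := by
    refine lintegral_tendsto_of_tendsto_of_monotone
      (fun N => ((measurable_SS b N).pow hs).ennreal_ofReal.aemeasurable) ?_ ?_
    · refine Filter.Eventually.of_forall fun x N M hNM => ?_
      simp only [eS]
      refine ENNReal.rpow_le_rpow ?_ (hspos x).le
      exact Finset.sum_le_sum_of_subset (Finset.range_mono (by omega))
    · refine Filter.Eventually.of_forall fun x => ?_
      simp only [eS]
      refine (ENNReal.continuous_rpow_const.tendsto _).comp ?_
      exact (ENNReal.tendsto_nat_tsum _).comp (Filter.tendsto_add_atTop_nat 1)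
  refine le_of_tendsto' hlim fun N => ?_
  calc ∫⁻ x, ENNReal.ofReal (SS b N x ^ s x)
      = ∑' m, ∫⁻ x in dyadicCube n 0 m, ENNReal.ofReal (SS b N x ^ s x) := by
        rw [← setLIntegral_univ, lintegral_eq_tsum_cube 0 _ MeasurableSet.univ]
        simp only [Set.inter_univ]
    _ ≤ ∑' m, ENNReal.ofReal (4 * B * max 1 sp * (1 / sm + (1 / (4 * B * max 1 sp)) ^ (-sp))) *
        ∫⁻ x in dyadicCube n 0 m, ENNReal.ofReal (RR b E N x ^ s x) :=
        ENNReal.tsum_le_tsum fun m => core_unit hs hsm hsb hB1 hb hb0 hH hE hd hB m N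
    _ = ENNReal.ofReal (4 * B * max 1 sp * (1 / sm + (1 / (4 * B * max 1 sp)) ^ (-sp))) *
        ∫⁻ x, ENNReal.ofReal (RR b E N x ^ s x) := by
        rw [ENNReal.tsum_mul_left]
        congr 1
        rw [← setLIntegral_univ, lintegral_eq_tsum_cube 0 _ MeasurableSet.univ]
        simp only [Set.inter_univ]
    _ ≤ _ := by
        gcongr with x
        rw [eR]
        exact ENNReal.rpow_le_rpow (ENNReal.sum_le_tsum _) (hspos x).le


lemma ennreal_add_rpow_le {s sp : ℝ} (hs : 0 < s) (hsp : s ≤ sp) (a c : ℝ≥0∞) :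
    (a + c) ^ s ≤ ENNReal.ofReal (2 ^ sp) * (a ^ s + c ^ s) := by
  have h2 : (2 : ℝ≥0∞) ^ s ≤ ENNReal.ofReal (2 ^ sp) := by
    rw [← ENNReal.ofReal_rpow_of_pos (by norm_num)]
    simp only [ENNReal.ofReal_ofNat]
    exact ENNReal.rpow_le_rpow_of_exponent_le (by norm_num) hsp
  calc (a + c) ^ s ≤ (2 * max a c) ^ s := by
        refine ENNReal.rpow_le_rpow ?_ hs.le
        rw [two_mul]
        exact add_le_add (le_max_left _ _) (le_max_right _ _)
    _ = 2 ^ s * (max a c) ^ s := ENNReal.mul_rpow_of_nonneg _ _ hs.le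
    _ ≤ ENNReal.ofReal (2 ^ sp) * (a ^ s + c ^ s) := by
        gcongr
        rcases le_total a c with h | h
        · rw [max_eq_right h]; exact le_add_self
        · rw [max_eq_left h]; exact le_self_add

/-- Decaying weight on unit cubes. -/
def ew {n : ℕ} (κ : ℝ) (m : Fin n → ℤ) : ℝ := (Real.exp 1 + ‖(cn 0 m : En n)‖) ^ (-κ)

lemma ew_pos {n : ℕ} (κ : ℝ) (m : Fin n → ℤ) : 0 < ew κ m := by unfold ew; positivity

lemma ew_le_one {n : ℕ} {κ : ℝ} (hκ : 0 ≤ κ) (m : Fin n → ℤ) : ew κ m ≤ 1 := by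
  unfold ew
  refine Real.rpow_le_one_of_one_le_of_nonpos ?_ (by linarith)
  have := Real.add_one_le_exp 1
  have := norm_nonneg (cn 0 m : En n)
  linarith

lemma ew_integral {n : ℕ} {sm : ℝ} (hsm : 0 < sm) :
    ∃ C : ℝ, 0 ≤ C ∧ ∀ s : En n → ℝ, (∀ x, sm ≤ s x) →
      ∫⁻ x, ENNReal.ofReal (ew ((n + 1) / sm) (idx 0 x)) ^ s x ≤ ENNReal.ofReal C := by
  have hfin := finite_integral_one_add_norm (E := En n) (μ := volume) (r := n + 1)
    (by rw [finrank_euclideanSpace_fin]; linarith)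
  set I := ∫⁻ x : En n, ENNReal.ofReal ((1 + ‖x‖) ^ (-((n : ℝ) + 1)))
  refine ⟨((n : ℝ) + 2) ^ ((n : ℝ) + 1) * I.toReal, by positivity, fun s hs => ?_⟩
  rw [ENNReal.ofReal_mul (by positivity), ENNReal.ofReal_toReal hfin.ne,
    ← lintegral_const_mul' _ _ ENNReal.ofReal_ne_top]
  refine lintegral_mono fun x => ?_
  have hκ : 0 ≤ ((n : ℝ) + 1) / sm := by positivity
  have h0 : 0 < ew (((n : ℝ) + 1) / sm) (idx 0 x) := ew_pos _ _
  rw [ENNReal.ofReal_rpow_of_pos h0, ← ENNReal.ofReal_mul (by positivity)]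
  refine ENNReal.ofReal_le_ofReal ?_
  refine (Real.rpow_le_rpow_of_exponent_ge h0 (ew_le_one hκ _) (hs x)).trans ?_
  unfold ew
  rw [← Real.rpow_mul (by positivity)]
  have e1 : -(((n : ℝ) + 1) / sm) * sm = -((n : ℝ) + 1) := by field_simp
  rw [e1, Real.rpow_neg (by positivity), Real.rpow_neg (by positivity), ← div_eq_mul_inv,
    inv_eq_one_div, div_le_div_iff₀ (by positivity) (by positivity), one_mul,
    ← Real.mul_rpow (by positivity) (by positivity)]
  refine Real.rpow_le_rpow (by positivity) ?_ (by positivity)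
  have h1 := norm_sub_le_cube 0 (idx_cn 0 (idx 0 x)).symm
  simp only [neg_zero, zpow_zero, mul_one] at h1
  have h2 := norm_le_norm_add_norm_sub' x (cn 0 (idx 0 x))
  have := Real.add_one_le_exp 1
  have := norm_nonneg (cn 0 (idx 0 x))
  have : (0 : ℝ) ≤ n := by positivity
  nlinarith

lemma core {n : ℕ} {s : En n → ℝ} {c : ℝ} (hg : GlobLogHolder c s) {sm sp : ℝ} (hsm : 0 < sm)
    (hsb : ∀ x, sm ≤ s x ∧ s x ≤ sp) (K : ℝ) :
    ∃ C : ℝ, 1 ≤ C ∧ ∀ (b : ℕ → (Fin n → ℤ) → ℝ) (E : ℕ → Set (En n)),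
      (∀ v m, 0 ≤ b v m) → (∀ v, MeasurableSet (E v)) →
      (∀ (v : ℕ) m, volume (dyadicCube n v m) ≤ 2 * volume (dyadicCube n v m ∩ E v)) →
      ∫⁻ x, (∑' v : ℕ, (E v).indicator (fun y => ENNReal.ofReal (b v (idx v y))) x) ^ s x
        ≤ ENNReal.ofReal K →
      ∫⁻ x, (∑' v : ℕ, ENNReal.ofReal (b v (idx v x))) ^ s x ≤ ENNReal.ofReal C := by
  have hs : Measurable s := hg.1.continuous.measurable
  have hspos : ∀ x, 0 < s x := fun x => hsm.trans_le (hsb x).1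
  obtain ⟨C2, hC2, h2⟩ := hg.1.cube
  obtain ⟨C3, hC3, h3⟩ := hg.cube
  obtain ⟨Ce, hCe, he⟩ := ew_integral (n := n) hsm
  have he := he s fun x => (hsb x).1
  set κ : ℝ := ((n : ℝ) + 1) / sm with hκ
  have hκ0 : 0 ≤ κ := by positivity
  set K' := max 1 (2 ^ sp * (max K 0 + Ce)) with hK'
  have hK'1 : 1 ≤ K' := le_max_left _ _
  set C1 := 1 + (1 / sm) * (Real.log (2 * K') + n * Real.log 2) with hC1
  have hlK : 0 ≤ Real.log (2 * K') := Real.log_nonneg (by linarith)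
  have hl2 : 0 ≤ Real.log 2 := Real.log_nonneg (by norm_num)
  have hC10 : 0 ≤ C1 := by positivity
  set B := Real.exp (C1 * C2 + κ * C3) with hBd
  have hB1 : 1 ≤ B := Real.one_le_exp (by positivity)
  set K1 := 4 * B * max 1 sp * (1 / sm + (1 / (4 * B * max 1 sp)) ^ (-sp)) with hK1
  refine ⟨max 1 (K1 * K'), le_max_left _ _, fun b E hb hE hd hK => ?_⟩
  set b' : ℕ → (Fin n → ℤ) → ℝ := fun v m => b v m + if v = 0 then ew κ m else 0 with hb'
  have hbb' : ∀ v m, b v m ≤ b' v m := by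
    intro v m
    simp only [hb']
    split_ifs
    · linarith [ew_pos κ m]
    · simp
  have hb'0 : ∀ v m, 0 ≤ b' v m := fun v m => (hb v m).trans (hbb' v m)
  have hb'e : ∀ m, ew κ m ≤ b' 0 m := fun m => by simp [hb', hb]
  have hb'pos : ∀ m, 0 < b' 0 m := fun m => (ew_pos κ m).trans_le (hb'e m)
  have hmod : ∫⁻ x, (∑' v : ℕ, (E v).indicator (fun y => ENNReal.ofReal (b' v (idx v y))) x) ^ s x
      ≤ ENNReal.ofReal K' := by
    have hpt : ∀ x, (∑' v : ℕ, (E v).indicator (fun y => ENNReal.ofReal (b' v (idx v y))) x) ≤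
        (∑' v : ℕ, (E v).indicator (fun y => ENNReal.ofReal (b v (idx v y))) x) +
          ENNReal.ofReal (ew κ (idx 0 x)) := by
      intro x
      have e0 : ENNReal.ofReal (ew κ (idx 0 x)) =
          ∑' v : ℕ, if v = 0 then ENNReal.ofReal (ew κ (idx 0 x)) else 0 := by
        rw [tsum_ite_eq]
      rw [e0, ← ENNReal.tsum_add]
      refine ENNReal.tsum_le_tsum fun v => ?_
      by_cases hx : x ∈ E v
      · simp only [Set.indicator_of_mem hx, hb']
        refine ENNReal.ofReal_add_le.trans ?_
        gcongr
        split_ifs with hv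
        · subst hv; simp
        · simp
      · simp [hx]
    calc _ ≤ ∫⁻ x, ENNReal.ofReal (2 ^ sp) *
          ((∑' v : ℕ, (E v).indicator (fun y => ENNReal.ofReal (b v (idx v y))) x) ^ s x +
          ENNReal.ofReal (ew κ (idx 0 x)) ^ s x) := by
          refine lintegral_mono fun x => ?_
          refine (ENNReal.rpow_le_rpow (hpt x) (hspos x).le).trans ?_
          exact ennreal_add_rpow_le (hspos x) (hsb x).2 _ _
      _ = ENNReal.ofReal (2 ^ sp) *
          ((∫⁻ x, (∑' v : ℕ, (E v).indicator (fun y => ENNReal.ofReal (b v (idx v y))) x) ^ s x) +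
          ∫⁻ x, ENNReal.ofReal (ew κ (idx 0 x)) ^ s x) := by
          rw [lintegral_const_mul' _ _ ENNReal.ofReal_ne_top, lintegral_add_left]
          refine Measurable.pow ?_ hs
          exact Measurable.tsum fun v =>
            (measurable_bidx (fun m => ENNReal.ofReal (b v m)) v).indicator (hE v)
      _ ≤ ENNReal.ofReal (2 ^ sp) * (ENNReal.ofReal (max K 0) + ENNReal.ofReal Ce) := by
          gcongr
          exact hK.trans (ENNReal.ofReal_le_ofReal (le_max_left _ _))
      _ = ENNReal.ofReal (2 ^ sp * (max K 0 + Ce)) := by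
          rw [← ENNReal.ofReal_add (by positivity) hCe, ← ENNReal.ofReal_mul (by positivity)]
      _ ≤ _ := ENNReal.ofReal_le_ofReal (le_max_right _ _)
  set H : ℕ → ℝ := fun v => (2 * K' * (2 ^ v) ^ n) ^ (1 / sm) with hHd
  have hbase : ∀ v : ℕ, (1 : ℝ) ≤ 2 * K' * (2 ^ v) ^ n := by
    intro v
    have : (1 : ℝ) ≤ (2 ^ v) ^ n := one_le_pow₀ (one_le_pow₀ (by norm_num))
    nlinarith
  have hH1 : ∀ v, 1 ≤ H v := fun v => Real.one_le_rpow (hbase v) (by positivity)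
  have hH : ∀ v m, b' v m ≤ H v := by
    intro v m
    rcases le_total (b' v m) 1 with h1 | h1
    · exact h1.trans (hH1 v)
    set Q := dyadicCube n v m
    have hQ : MeasurableSet Q := measurableSet_cube _ _
    have i1 : ENNReal.ofReal (b' v m ^ sm) * volume (Q ∩ E v) ≤ ENNReal.ofReal K' := by
      rw [← setLIntegral_const]
      refine le_trans ?_ hmod
      refine le_trans ?_ (setLIntegral_le_lintegral (Q ∩ E v) _)
      refine setLIntegral_mono' (hQ.inter (hE v)) fun x hx => ?_
      have hxm : idx v x = m := mem_cube_iff.1 hx.1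
      have hle : ENNReal.ofReal (b' v m) ≤
          ∑' v : ℕ, (E v).indicator (fun y => ENNReal.ofReal (b' v (idx v y))) x := by
        refine le_trans (le_of_eq ?_) (ENNReal.le_tsum v)
        rw [Set.indicator_of_mem hx.2, hxm]
      refine le_trans ?_ (ENNReal.rpow_le_rpow hle (hspos x).le)
      rw [ENNReal.ofReal_rpow_of_nonneg (hb'0 _ _) (hspos x).le]
      exact ENNReal.ofReal_le_ofReal (Real.rpow_le_rpow_of_exponent_le h1 (hsb x).1)
    have i2 : ENNReal.ofReal (b' v m ^ sm * ((2 : ℝ) ^ (-(v : ℤ))) ^ n) ≤ ENNReal.ofReal (2 * K') := by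
      have hbs : 0 ≤ b' v m ^ sm := Real.rpow_nonneg (hb'0 _ _) _
      rw [ENNReal.ofReal_mul hbs, ← vol_cube (v : ℤ) m, ENNReal.ofReal_mul (by norm_num)]
      calc ENNReal.ofReal (b' v m ^ sm) * volume Q
          ≤ ENNReal.ofReal (b' v m ^ sm) * (2 * volume (Q ∩ E v)) := by
            gcongr; exact hd v m
        _ = 2 * (ENNReal.ofReal (b' v m ^ sm) * volume (Q ∩ E v)) := by ring
        _ ≤ 2 * ENNReal.ofReal K' := by gcongr
        _ = _ := by simp
    rw [ENNReal.ofReal_le_ofReal_iff (by positivity), zpow_neg, zpow_natCast, inv_pow,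
      ← div_eq_mul_inv, div_le_iff₀ (by positivity)] at i2
    have := Real.rpow_le_rpow (Real.rpow_nonneg (hb'0 _ _) _) i2 (z := 1 / sm) (by positivity)
    rwa [← Real.rpow_mul (hb'0 _ _), mul_one_div_cancel hsm.ne', Real.rpow_one] at this
  have hB : ∀ (v : ℕ) (x y : En n), idx (v : ℤ) x = idx v y →
      SS b' v x ^ (s x - 1) ≤ B * SS b' v x ^ (s y - 1) := by
    intro v x y hxy
    have hle0 : b' 0 (idx 0 x) ≤ SS b' v x :=
      Finset.single_le_sum (f := fun u : ℕ => b' u (idx u x)) (fun i _ => hb'0 _ _)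
        (Finset.mem_range.2 (Nat.succ_pos v))
    have hSpos : 0 < SS b' v x := (hb'pos _).trans_le hle0
    have hv1 : (0 : ℝ) < (v : ℝ) + 1 := by positivity
    have hup : SS b' v x ≤ (v + 1) * H v := by
      calc SS b' v x ≤ ∑ u ∈ Finset.range (v + 1), H v := by
            refine Finset.sum_le_sum fun u hu => (hH u _).trans ?_
            have hu' : u ≤ v := by have := Finset.mem_range.1 hu; omega
            simp only [hHd]
            refine Real.rpow_le_rpow (by positivity) ?_ (by positivity)
            gcongr
            norm_num
        _ = _ := by simp
    have hlogup : Real.log (SS b' v x) ≤ C1 * (v + 1) := by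
      have i1 := Real.log_le_log hSpos hup
      have hHpos : 0 < H v := lt_of_lt_of_le one_pos (hH1 v)
      have hlH : Real.log (H v) = 1 / sm * (Real.log (2 * K') + n * (v * Real.log 2)) := by
        simp only [hHd]
        rw [Real.log_rpow (by positivity), Real.log_mul (by positivity) (by positivity),
          Real.log_pow, Real.log_pow]
      rw [Real.log_mul hv1.ne' hHpos.ne', hlH] at i1
      have i2 : Real.log ((v : ℝ) + 1) ≤ v + 1 := (Real.log_le_sub_one_of_pos hv1).trans (by linarith)
      have i3 : Real.log (2 * K') + n * (v * Real.log 2) ≤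
          (Real.log (2 * K') + n * Real.log 2) * (v + 1) := by
        have hn : 0 ≤ (n : ℝ) * Real.log 2 := by positivity
        have hv : (0 : ℝ) ≤ v := by positivity
        nlinarith
      have i4 := mul_le_mul_of_nonneg_left i3 (show 0 ≤ 1 / sm by positivity)
      rw [hC1]
      nlinarith
    set Λ := Real.log (Real.exp 1 + ‖cn 0 (idx 0 x)‖) with hΛ
    have hΛ1 : 1 ≤ Λ := one_le_logE (norm_nonneg _)
    have hloglow : -(κ * Λ) ≤ Real.log (SS b' v x) := by
      have i1 := Real.log_le_log (ew_pos κ (idx 0 x)) ((hb'e _).trans hle0)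
      unfold ew at i1
      rw [Real.log_rpow (by positivity)] at i1
      linarith
    have habs : |Real.log (SS b' v x)| ≤ C1 * (v + 1) + κ * Λ := by
      rw [abs_le]
      constructor
      · have : 0 ≤ C1 * ((v : ℝ) + 1) := by positivity
        linarith
      · have : 0 ≤ κ * Λ := by positivity
        linarith
    have hosc : Real.log (SS b' v x) * (s x - s y) ≤ C1 * C2 + κ * C3 := by
      have j1 := h2 v x y hxy
      have j2 := h3 x y (idx_mono (by positivity) hxy)
      rw [← hΛ] at j2
      calc Real.log (SS b' v x) * (s x - s y) ≤ |Real.log (SS b' v x)| * |s x - s y| := by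
            rw [← abs_mul]; exact le_abs_self _
        _ ≤ (C1 * (v + 1) + κ * Λ) * |s x - s y| := by gcongr
        _ = C1 * (|s x - s y| * (v + 1)) + κ * (|s x - s y| * Λ) := by ring
        _ ≤ _ := by gcongr
    have e : s x - 1 = (s x - s y) + (s y - 1) := by ring
    rw [e, Real.rpow_add hSpos]
    refine mul_le_mul_of_nonneg_right ?_ (Real.rpow_nonneg hSpos.le _)
    rw [Real.rpow_def_of_pos hSpos]
    exact Real.exp_le_exp.2 hosc
  have hfinal := core_global hs hsm hsb hB1 hb'0 hb'pos hH hE hd hB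
  have hK10 : 0 ≤ K1 := by positivity
  calc _ ≤ ∫⁻ x, (∑' v : ℕ, ENNReal.ofReal (b' v (idx v x))) ^ s x := by
        refine lintegral_mono fun x => ENNReal.rpow_le_rpow ?_ (hspos x).le
        exact ENNReal.tsum_le_tsum fun v => ENNReal.ofReal_le_ofReal (hbb' _ _)
    _ ≤ ENNReal.ofReal K1 * ENNReal.ofReal K' := hfinal.trans (by gcongr)
    _ = ENNReal.ofReal (K1 * K') := (ENNReal.ofReal_mul hK10).symm
    _ ≤ _ := ENNReal.ofReal_le_ofReal (le_max_right _ _)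


lemma tsum_idx {n : ℕ} (v : ℤ) (f : (Fin n → ℤ) → ℝ≥0∞) (x : En n) :
    ∑' m, f m * (dyadicCube n v m).indicator (fun _ => (1 : ℝ≥0∞)) x = f (idx v x) := by
  rw [tsum_eq_single (idx v x)]
  · rw [Set.indicator_of_mem (mem_cube_iff.2 rfl), mul_one]
  · intro m hm
    rw [Set.indicator_of_notMem, mul_zero]
    intro h
    exact hm (mem_cube_iff.1 h).symm

/-- The weight `2^{v(α(x)+n/2)}`. -/
def ww {n : ℕ} (α : En n → ℝ) (v : ℕ) (x : En n) : ℝ := (2 : ℝ) ^ ((v : ℝ) * (α x + n / 2))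

lemma ww_pos {n : ℕ} (α : En n → ℝ) (v : ℕ) (x : En n) : 0 < ww α v x := by
  unfold ww; positivity

/-- The inner `ℓ_q` sum. -/
def GG {n : ℕ} (α : En n → ℝ) (q : ℝ) (lam : ℕ → (Fin n → ℤ) → ℂ) (x : En n) : ℝ≥0∞ :=
  ∑' v : ℕ, ENNReal.ofReal ((ww α v x * ‖lam v (idx v x)‖) ^ q)

/-- The modular. -/
def modl {n : ℕ} (α p : En n → ℝ) (q : ℝ) (lam : ℕ → (Fin n → ℤ) → ℂ) : ℝ≥0∞ :=
  ∫⁻ x, GG α q lam x ^ (p x / q)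

lemma seqNorm_eq {n : ℕ} (α p : En n → ℝ) {q : ℝ} (hq : 0 < q) (lam : ℕ → (Fin n → ℤ) → ℂ) :
    seqNorm α p (fun _ => q) lam = luxNorm p fun x => GG α q lam x ^ (1 / q) := by
  unfold seqNorm mixedNorm GG
  congr 1
  funext x
  congr 1
  refine tsum_congr fun v => ?_
  beta_reduce
  rw [tsum_idx (v : ℤ) (fun m => ENNReal.ofReal ((2 : ℝ) ^ ((v : ℝ) * (α x + n / 2)) * ‖lam v m‖)),
    ENNReal.ofReal_rpow_of_nonneg (by positivity) hq.le]
  rfl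

lemma GG_scale {n : ℕ} (α : En n → ℝ) {q : ℝ} (hq : 0 < q) (lam : ℕ → (Fin n → ℤ) → ℂ)
    {k : ℝ} (hk : 0 < k) (x : En n) :
    GG α q lam x ^ (1 / q) / ENNReal.ofReal k =
      GG α q (fun v m => lam v m / (k : ℂ)) x ^ (1 / q) := by
  have h : GG α q (fun v m => lam v m / (k : ℂ)) x = GG α q lam x * ENNReal.ofReal k ^ (-q) := by
    unfold GG
    rw [← ENNReal.tsum_mul_right]
    refine tsum_congr fun v => ?_
    have hw := (ww_pos α v x).le
    rw [ENNReal.ofReal_rpow_of_pos hk, ← ENNReal.ofReal_mul (by positivity)]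
    congr 1
    rw [norm_div, Complex.norm_real, Real.norm_of_nonneg hk.le, ← mul_div_assoc,
      Real.div_rpow (by positivity) hk.le, Real.rpow_neg hk.le, div_eq_mul_inv]
  rw [h, ENNReal.mul_rpow_of_nonneg _ _ (by positivity), ← ENNReal.rpow_mul]
  have : -q * (1 / q) = -1 := by field_simp
  rw [this, ENNReal.rpow_neg_one, div_eq_mul_inv]

lemma modl_le_one_of_lt {n : ℕ} {α p : En n → ℝ} {q : ℝ} (hq : 0 < q) (hp : ∀ x, 0 ≤ p x)
    {lam : ℕ → (Fin n → ℤ) → ℂ} {k : ℝ} (hk : 0 < k)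
    (h : ∃ c' : ℝ≥0∞, c' ≤ ENNReal.ofReal k ∧ ∫⁻ x, (GG α q lam x ^ (1 / q) / c') ^ p x ≤ 1) :
    modl α p q (fun v m => lam v m / (k : ℂ)) ≤ 1 := by
  obtain ⟨c', hc', h⟩ := h
  refine le_trans (lintegral_mono fun x => ?_) h
  have e : p x / q = 1 / q * p x := by ring
  rw [e, ENNReal.rpow_mul, ← GG_scale α hq lam hk]
  refine ENNReal.rpow_le_rpow ?_ (hp x)
  gcongr

lemma seqNorm_le_of_modl {n : ℕ} {α p : En n → ℝ} {q : ℝ} (hq : 0 < q) (hp : ∀ x, 1 ≤ p x)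
    {lam : ℕ → (Fin n → ℤ) → ℂ} {k C : ℝ} (hk : 0 < k) (hC : 1 ≤ C)
    (h : modl α p q (fun v m => lam v m / (k : ℂ)) ≤ ENNReal.ofReal C) :
    seqNorm α p (fun _ => q) lam ≤ ENNReal.ofReal (C * k) := by
  have hC0 : 0 < C := by linarith
  rw [seqNorm_eq α p hq]
  refine sInf_le ⟨by positivity, ?_⟩
  have hCi : (ENNReal.ofReal C)⁻¹ ≤ 1 := by
    rw [ENNReal.inv_le_one]
    simpa using hC
  calc ∫⁻ x, (GG α q lam x ^ (1 / q) / ENNReal.ofReal (C * k)) ^ p x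
      ≤ ∫⁻ x, (ENNReal.ofReal C)⁻¹ * GG α q (fun v m => lam v m / (k : ℂ)) x ^ (p x / q) := by
        refine lintegral_mono fun x => ?_
        have hp0 : 0 ≤ p x := by linarith [hp x]
        have e : p x / q = 1 / q * p x := by ring
        have e2 : GG α q lam x ^ (1 / q) / ENNReal.ofReal (C * k) =
            (ENNReal.ofReal C)⁻¹ * (GG α q lam x ^ (1 / q) / ENNReal.ofReal k) := by
          rw [ENNReal.ofReal_mul hC0.le, ENNReal.div_eq_inv_mul, ENNReal.div_eq_inv_mul,
            ENNReal.mul_inv (Or.inr ENNReal.ofReal_ne_top) (Or.inl ENNReal.ofReal_ne_top)]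
          ring
        rw [e2, e, ENNReal.rpow_mul, ← GG_scale α hq lam hk, ENNReal.mul_rpow_of_nonneg _ _ hp0]
        gcongr
        calc (ENNReal.ofReal C)⁻¹ ^ p x ≤ (ENNReal.ofReal C)⁻¹ ^ (1 : ℝ) :=
              ENNReal.rpow_le_rpow_of_exponent_ge hCi (hp x)
          _ = _ := ENNReal.rpow_one _
    _ = (ENNReal.ofReal C)⁻¹ * modl α p q (fun v m => lam v m / (k : ℂ)) := by
        rw [lintegral_const_mul', modl]
        exact ENNReal.inv_ne_top.2 (by simpa using hC0)
    _ ≤ (ENNReal.ofReal C)⁻¹ * ENNReal.ofReal C := by gcongr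
    _ = 1 := ENNReal.inv_mul_cancel (by simpa using hC0) ENNReal.ofReal_ne_top

lemma seqNormInf_le_one_iff {n : ℕ} (α : En n → ℝ) {q : ℝ} (hq : 0 < q)
    (lam : ℕ → (Fin n → ℤ) → ℂ) :
    seqNormInf α q lam ≤ 1 ↔ ∀ (vQ : ℤ) (mQ : Fin n → ℤ),
      (∑' v : ℕ, if vQ ≤ (v : ℤ) then ∫⁻ x in dyadicCube n vQ mQ,
        ENNReal.ofReal ((ww α v x * ‖lam v (idx v x)‖) ^ q) else 0) ≤
        volume (dyadicCube n vQ mQ) := by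
  unfold seqNormInf
  simp only [iSup_le_iff]
  refine forall_congr' fun vQ => forall_congr' fun mQ => ?_
  have e : ∀ v : ℕ, ∀ x, ∑' m : Fin n → ℤ,
      ENNReal.ofReal ((2 : ℝ) ^ ((v : ℝ) * (α x + n / 2) * q) * ‖lam v m‖ ^ q) *
        (dyadicCube n (v : ℤ) m).indicator (fun _ => (1 : ℝ≥0∞)) x =
      ENNReal.ofReal ((ww α v x * ‖lam v (idx v x)‖) ^ q) := by
    intro v x
    rw [tsum_idx (v : ℤ) (fun m =>
      ENNReal.ofReal ((2 : ℝ) ^ ((v : ℝ) * (α x + n / 2) * q) * ‖lam v m‖ ^ q))]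
    rw [Real.mul_rpow (ww_pos α v x).le (norm_nonneg _), ww, ← Real.rpow_mul (by norm_num)]
  simp only [e]
  have hV0 := vol_cube_ne_zero vQ mQ
  have hVt := vol_cube_ne_top vQ mQ
  have hi : 0 < 1 / q := by positivity
  rw [ENNReal.rpow_neg, mul_comm, ← div_eq_mul_inv, ENNReal.div_le_iff, one_mul,
    ENNReal.rpow_le_rpow_iff hi]
  · simp [hV0, hi.le, hVt]
  · exact ENNReal.rpow_ne_top_of_nonneg hi.le hVt

lemma rpow_const_bound {Z s S : ℝ} (hZ : 1 ≤ Z) (hs : 0 ≤ s) (hS : s ≤ S) {A B : ℝ≥0∞}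
    (h : A ≤ ENNReal.ofReal Z * B) : A ^ s ≤ ENNReal.ofReal (Z ^ S) * B ^ s := by
  refine (ENNReal.rpow_le_rpow h hs).trans ?_
  rw [ENNReal.mul_rpow_of_nonneg _ _ hs, ENNReal.ofReal_rpow_of_pos (by linarith)]
  gcongr

lemma GlobLogHolder.smul {n : ℕ} {c : ℝ} {g : En n → ℝ} (hg : GlobLogHolder c g) {k : ℝ}
    (hk : 0 < k) : GlobLogHolder (k * c) (fun x => k * g x) := by
  obtain ⟨⟨hc, h1⟩, gi, cd, hcd, h2⟩ := hg
  refine ⟨⟨by positivity, fun x y => ?_⟩, k * gi, k * cd, by positivity, fun x => ?_⟩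
  · rw [← mul_sub, abs_mul, abs_of_pos hk, mul_div_assoc]
    exact mul_le_mul_of_nonneg_left (h1 x y) hk.le
  · rw [← mul_sub, abs_mul, abs_of_pos hk, mul_div_assoc]
    exact mul_le_mul_of_nonneg_left (h2 x) hk.le

lemma LocLogHolder.combo {n : ℕ} {c d θ : ℝ} {f g h : En n → ℝ} (hf : LocLogHolder c f)
    (hg : LocLogHolder d g) (hθ : θ ∈ Set.Ioo (0 : ℝ) 1)
    (hh : ∀ x, h x = (1 - θ) * f x + θ * g x) :
    LocLogHolder ((1 - θ) * c + θ * d) h := by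
  obtain ⟨hc, h1⟩ := hf
  obtain ⟨hd, h2⟩ := hg
  have ht0 := hθ.1
  have ht1 : 0 < 1 - θ := sub_pos.2 hθ.2
  refine ⟨by positivity, fun x y => ?_⟩
  have e : h x - h y = (1 - θ) * (f x - f y) + θ * (g x - g y) := by rw [hh, hh]; ring
  rw [e]
  refine (abs_add_le _ _).trans ?_
  rw [abs_mul, abs_mul, abs_of_pos ht0, abs_of_pos ht1, add_div, mul_div_assoc, mul_div_assoc]
  exact add_le_add (mul_le_mul_of_nonneg_left (h1 x y) ht1.le)
    (mul_le_mul_of_nonneg_left (h2 x y) ht0.le)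

lemma measurable_ww {n : ℕ} {c : ℝ} {α : En n → ℝ} (h : LocLogHolder c α) (v : ℕ) :
    Measurable (ww α v) := by
  unfold ww
  have := h.continuous.measurable
  fun_prop

lemma measurable_term {n : ℕ} {c : ℝ} {α : En n → ℝ} (h : LocLogHolder c α) (q : ℝ)
    (lam : ℕ → (Fin n → ℤ) → ℂ) (v : ℕ) :
    Measurable fun x : En n => ENNReal.ofReal ((ww α v x * ‖lam v (idx v x)‖) ^ q) :=
  (((measurable_ww h v).mul (measurable_bidx (fun m => ‖lam v m‖) v)).pow_const q).ennreal_ofReal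

lemma tsum_holder {a b : ℝ} (ha : 0 ≤ a) (hb : 0 ≤ b) (hab : a + b = 1) (f g : ℕ → ℝ≥0∞) :
    ∑' v, f v ^ a * g v ^ b ≤ (∑' v, f v) ^ a * (∑' v, g v) ^ b := by
  have := ENNReal.lintegral_mul_norm_pow_le (μ := Measure.count) (f := f) (g := g)
    (measurable_of_countable _).aemeasurable (measurable_of_countable _).aemeasurable ha hb hab
  simpa [lintegral_count] using this


lemma tsum_first_le (g : ℕ → ℝ≥0∞) (K : ℝ≥0∞) :
    ∑' v, (if (∑' w, if v ≤ w then g w else 0) ≤ K then g v else 0) ≤ K := by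
  classical
  by_cases h : ∃ v, (∑' w, if v ≤ w then g w else 0) ≤ K
  · refine le_trans (ENNReal.tsum_le_tsum fun v => ?_) (Nat.find_spec h)
    by_cases hv : (∑' w, if v ≤ w then g w else 0) ≤ K
    · rw [if_pos hv, if_pos (Nat.find_min' h hv)]
    · rw [if_neg hv]; exact zero_le
  · push Not at h
    have : ∀ v, (if (∑' w, if v ≤ w then g w else 0) ≤ K then g v else 0) = 0 := by
      intro v
      rw [if_neg (not_le.2 (h v))]
    simp [this]

lemma wt_up {n : ℕ} {α : En n → ℝ} {C q : ℝ} (hC : 1 ≤ C) (hq : 0 < q) {v : ℕ} {x : En n}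
    (h : ww α v x ≤ C * wt α v (idx v x)) {t : ℝ} (ht : 0 ≤ t) :
    ENNReal.ofReal ((ww α v x * t) ^ q) ≤
      ENNReal.ofReal (C ^ q) * ENNReal.ofReal ((wt α v (idx v x) * t) ^ q) := by
  have hw := (ww_pos α v x).le
  have hw2 := (wt_pos α v (idx v x)).le
  have hC0 : 0 ≤ C := by linarith
  rw [← ENNReal.ofReal_mul (by positivity), ← Real.mul_rpow hC0 (by positivity), ← mul_assoc]
  gcongr

lemma wt_down {n : ℕ} {α : En n → ℝ} {C q : ℝ} (hC : 1 ≤ C) (hq : 0 < q) {v : ℕ} {x : En n}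
    (h : wt α v (idx v x) ≤ C * ww α v x) {t : ℝ} (ht : 0 ≤ t) :
    ENNReal.ofReal ((wt α v (idx v x) * t) ^ q) ≤
      ENNReal.ofReal (C ^ q) * ENNReal.ofReal ((ww α v x * t) ^ q) := by
  have hw := (ww_pos α v x).le
  have hw2 := (wt_pos α v (idx v x)).le
  have hC0 : 0 ≤ C := by linarith
  rw [← ENNReal.ofReal_mul (by positivity), ← Real.mul_rpow hC0 (by positivity), ← mul_assoc]
  gcongr

lemma ww_combo {n : ℕ} {α α₀ α₁ : En n → ℝ} {θ : ℝ}
    (hα : ∀ x, α x = (1 - θ) * α₀ x + θ * α₁ x) (v : ℕ) (x : En n) :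
    ww α v x = ww α₀ v x ^ (1 - θ) * ww α₁ v x ^ θ := by
  unfold ww
  rw [← Real.rpow_mul (by norm_num), ← Real.rpow_mul (by norm_num), ← Real.rpow_add (by norm_num),
    hα]
  congr 1
  ring

lemma ww_point {w0 w1 k l t θ q q₀ q₁ : ℝ} (hw0 : 0 < w0) (hw1 : 0 < w1) (hk : 0 ≤ k) (hl : 0 ≤ l)
    (ht : 0 ≤ t) (hq : 0 < q) (hq₀ : 0 < q₀) (hq₁ : 0 < q₁) (h : t ≤ k ^ (1 - θ) * l ^ θ) :
    (w0 ^ (1 - θ) * w1 ^ θ * t) ^ q ≤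
      ((w0 * k) ^ q₀) ^ ((1 - θ) * q / q₀) * ((w1 * l) ^ q₁) ^ (θ * q / q₁) := by
  have e0 : q₀ * ((1 - θ) * q / q₀) = (1 - θ) * q := by field_simp
  have e1 : q₁ * (θ * q / q₁) = θ * q := by field_simp
  rw [← Real.rpow_mul (by positivity), ← Real.rpow_mul (by positivity), e0, e1,
    Real.rpow_mul (by positivity), Real.rpow_mul (by positivity), ← Real.mul_rpow (by positivity)
      (by positivity), Real.mul_rpow hw0.le hk, Real.mul_rpow hw1.le hl]
  refine Real.rpow_le_rpow (by positivity) ?_ hq.le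
  calc _ ≤ w0 ^ (1 - θ) * w1 ^ θ * (k ^ (1 - θ) * l ^ θ) := by gcongr
    _ = _ := by ring

lemma lower {n : ℕ} {θ q₀ q₁ q : ℝ} (hθ : θ ∈ Set.Ioo (0 : ℝ) 1) (hq₀ : 0 < q₀) (hq₁ : 0 < q₁)
    (hq0 : 0 < q) (hq : (1 - θ) * q / q₀ + θ * q / q₁ = 1)
    {p₀ α₀ α₁ p α : En n → ℝ} {cp c0 c1 B : ℝ} (hp₀ : GlobLogHolder cp p₀)
    (hp₀b : ∀ x, 1 ≤ p₀ x ∧ p₀ x ≤ B)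
    (hα₀ : LocLogHolder c0 α₀) (hα₁ : LocLogHolder c1 α₁)
    (hp : ∀ x, p x = p₀ x / (1 - θ))
    (hα : ∀ x, α x = (1 - θ) * α₀ x + θ * α₁ x) :
    ∃ D : ℝ, 1 ≤ D ∧ ∀ (lam μ ν : ℕ → (Fin n → ℤ) → ℂ) (M : ℝ), 0 < M →
      modl α₀ p₀ q₀ μ ≤ 1 → seqNormInf α₁ q₁ ν ≤ 1 →
      (∀ v m, ‖lam v m‖ ≤ M * ‖μ v m‖ ^ (1 - θ) * ‖ν v m‖ ^ θ) →
      modl α p q (fun v m => lam v m / (M : ℂ)) ≤ ENNReal.ofReal D := by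
  have ht0 := hθ.1
  have ht1 : 0 < 1 - θ := sub_pos.2 hθ.2
  obtain ⟨C, hC, hcomp⟩ := (hα₀.combo hα₁ hθ hα).wt_comp
  set Z := C ^ q with hZ
  have hZ1 : 1 ≤ Z := Real.one_le_rpow hC hq0.le
  have hk : 0 < 1 / ((1 - θ) * q) := by positivity
  set S := 1 / ((1 - θ) * q) * B with hS
  have hB : 1 ≤ B := (hp₀b 0).1.trans (hp₀b 0).2
  have hSpos : 0 ≤ S := by positivity
  have hsb : ∀ x, 1 / ((1 - θ) * q) ≤ 1 / ((1 - θ) * q) * p₀ x ∧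
      1 / ((1 - θ) * q) * p₀ x ≤ S := fun x =>
    ⟨le_mul_of_one_le_right hk.le (hp₀b x).1, mul_le_mul_of_nonneg_left (hp₀b x).2 hk.le⟩
  have hse : ∀ x, p x / q = 1 / ((1 - θ) * q) * p₀ x := fun x => by rw [hp]; field_simp
  obtain ⟨D', hD', hcore⟩ := core (hp₀.smul hk) hk hsb ((Z * 2) ^ S)
  refine ⟨Z ^ S * D', one_le_mul_of_one_le_of_one_le (Real.one_le_rpow hZ1 hSpos) hD', ?_⟩
  intro lam μ ν M hM hμ hν hle
  set a := (1 - θ) * q / q₀ with ha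
  set b' := θ * q / q₁ with hb'
  have ha0 : 0 ≤ a := by positivity
  have hb0 : 0 ≤ b' := by positivity
  set g : ℕ → En n → ℝ≥0∞ := fun v x => ENNReal.ofReal ((ww α₁ v x * ‖ν v (idx v x)‖) ^ q₁) with hg
  have hgm : ∀ v, Measurable (g v) := fun v => measurable_term hα₁ q₁ ν v
  set f : ℕ → En n → ℝ≥0∞ := fun u x => ∑' v, if u ≤ v then g v x else 0 with hf
  have hfm : ∀ u, Measurable (f u) := by
    intro u
    refine Measurable.tsum fun v => ?_
    split_ifs
    · exact hgm v
    · exact measurable_const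
  set E : ℕ → Set (En n) := fun u => {x | f u x ≤ 2 * 1} with hE
  have hEm : ∀ u, MeasurableSet (E u) := fun u => measurableSet_le (hfm u) measurable_const
  have hdens : ∀ (u : ℕ) m, volume (dyadicCube n u m) ≤ 2 * volume (dyadicCube n u m ∩ E u) := by
    intro u m
    refine markov_cube _ m (hfm u) ?_
    have h1 := (seqNormInf_le_one_iff α₁ hq₁ ν).1 hν u m
    rw [one_mul]
    refine le_trans (le_of_eq ?_) h1
    rw [hf, lintegral_tsum]
    · refine tsum_congr fun v => ?_
      by_cases huv : u ≤ v
      · simp [huv, hg]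
      · simp [huv]
    · intro v
      split_ifs
      · exact (hgm v).aemeasurable
      · exact aemeasurable_const
  set b : ℕ → (Fin n → ℤ) → ℝ := fun v m => (wt α v m * ‖lam v m / (M : ℂ)‖) ^ q with hb
  have hbn : ∀ v m, 0 ≤ b v m := fun v m => by
    have := (wt_pos α v m).le
    positivity
  have hnorm : ∀ v m, ‖lam v m / (M : ℂ)‖ ≤ ‖μ v m‖ ^ (1 - θ) * ‖ν v m‖ ^ θ := by
    intro v m
    rw [norm_div, Complex.norm_real, Real.norm_of_nonneg hM.le, div_le_iff₀ hM]
    refine (hle v m).trans (le_of_eq (by ring))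
  have hpt : ∀ x, ∑' v : ℕ, (E v).indicator (fun y => ENNReal.ofReal (b v (idx v y))) x ≤
      ENNReal.ofReal (Z * 2) * GG α₀ q₀ μ x ^ a := by
    intro x
    calc ∑' v : ℕ, (E v).indicator (fun y => ENNReal.ofReal (b v (idx v y))) x
        ≤ ∑' v : ℕ, ENNReal.ofReal Z *
          (ENNReal.ofReal ((ww α₀ v x * ‖μ v (idx v x)‖) ^ q₀) ^ a *
            (if f v x ≤ 2 * 1 then g v x else 0) ^ b') := by
          refine ENNReal.tsum_le_tsum fun v => ?_
          by_cases hx : x ∈ E v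
          · have hx' : f v x ≤ 2 * 1 := hx
            rw [Set.indicator_of_mem hx, if_pos hx']
            refine (wt_down hC hq0 (hcomp v x).2 (norm_nonneg _)).trans ?_
            gcongr
            have h0 := ww_pos α₀ v x
            have h1 := ww_pos α₁ v x
            rw [hg]
            dsimp only
            rw [ENNReal.ofReal_rpow_of_nonneg (by positivity) ha0,
              ENNReal.ofReal_rpow_of_nonneg (by positivity) hb0,
              ← ENNReal.ofReal_mul (by positivity), ww_combo hα]
            exact ENNReal.ofReal_le_ofReal (ww_point h0 h1 (norm_nonneg _) (norm_nonneg _)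
              (norm_nonneg _) hq0 hq₀ hq₁ (hnorm v _))
          · rw [Set.indicator_of_notMem hx]
            exact zero_le
      _ = ENNReal.ofReal Z * ∑' v : ℕ, 
          (ENNReal.ofReal ((ww α₀ v x * ‖μ v (idx v x)‖) ^ q₀) ^ a *
            (if f v x ≤ 2 * 1 then g v x else 0) ^ b') := ENNReal.tsum_mul_left
      _ ≤ ENNReal.ofReal Z * (GG α₀ q₀ μ x ^ a *
            (∑' v : ℕ, (if f v x ≤ 2 * 1 then g v x else 0)) ^ b') := by
          gcongr
          exact tsum_holder ha0 hb0 hq _ _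
      _ ≤ ENNReal.ofReal Z * (GG α₀ q₀ μ x ^ a * 2) := by
          gcongr
          calc (∑' v : ℕ, (if f v x ≤ 2 * 1 then g v x else 0)) ^ b'
              ≤ (2 * 1 : ℝ≥0∞) ^ b' := by
                refine ENNReal.rpow_le_rpow ?_ hb0
                exact tsum_first_le (fun v => g v x) _
            _ ≤ (2 * 1 : ℝ≥0∞) ^ (1 : ℝ) := by
                refine ENNReal.rpow_le_rpow_of_exponent_le (by norm_num) (by linarith)
            _ = 2 := by simp
      _ = _ := by
          rw [ENNReal.ofReal_mul (by linarith)]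
          simp only [ENNReal.ofReal_ofNat]
          ring
  have hmain := hcore b E hbn hEm hdens (by
    calc ∫⁻ x, (∑' v : ℕ, (E v).indicator (fun y => ENNReal.ofReal (b v (idx v y))) x) ^
          (1 / ((1 - θ) * q) * p₀ x)
        ≤ ∫⁻ x, ENNReal.ofReal ((Z * 2) ^ S) * GG α₀ q₀ μ x ^ (p₀ x / q₀) := by
          refine lintegral_mono fun x => ?_
          have := rpow_const_bound (by linarith) (hk.le.trans (hsb x).1) (hsb x).2 (hpt x)
          refine this.trans (le_of_eq ?_)
          rw [← ENNReal.rpow_mul]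
          congr 2
          rw [ha]
          field_simp
      _ = ENNReal.ofReal ((Z * 2) ^ S) * modl α₀ p₀ q₀ μ := by
          rw [lintegral_const_mul' _ _ ENNReal.ofReal_ne_top, modl]
      _ ≤ ENNReal.ofReal ((Z * 2) ^ S) * 1 := by gcongr
      _ = _ := mul_one _)
  calc modl α p q (fun v m => lam v m / (M : ℂ))
      ≤ ∫⁻ x, ENNReal.ofReal (Z ^ S) *
        (∑' v : ℕ, ENNReal.ofReal (b v (idx v x))) ^ (1 / ((1 - θ) * q) * p₀ x) := by
        refine lintegral_mono fun x => ?_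
        beta_reduce
        rw [hse]
        refine rpow_const_bound hZ1 (hk.le.trans (hsb x).1) (hsb x).2 ?_
        rw [GG, ← ENNReal.tsum_mul_left]
        exact ENNReal.tsum_le_tsum fun v => wt_up hC hq0 (hcomp v x).1 (norm_nonneg _)
    _ ≤ ENNReal.ofReal (Z ^ S) * ENNReal.ofReal D' := by
        rw [lintegral_const_mul' _ _ ENNReal.ofReal_ne_top]
        gcongr
    _ = _ := by rw [← ENNReal.ofReal_mul (by positivity)]


/-- The mean of `h` over a dyadic cube. -/
def aQ {n : ℕ} (h : En n → ℝ≥0∞) (v : ℤ) (m : Fin n → ℤ) : ℝ≥0∞ :=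
  (∫⁻ x in dyadicCube n v m, h x) / volume (dyadicCube n v m)

lemma aQ_mul {n : ℕ} (h : En n → ℝ≥0∞) (v : ℤ) (m : Fin n → ℤ) :
    aQ h v m * volume (dyadicCube n v m) = ∫⁻ x in dyadicCube n v m, h x :=
  ENNReal.div_mul_cancel (vol_cube_ne_zero v m) (vol_cube_ne_top v m)

lemma cond_exp_cube {n : ℕ} {h : En n → ℝ≥0∞} (hh : Measurable h) {u v : ℤ} (huv : u ≤ v)
    (φ : (Fin n → ℤ) → ℝ≥0∞) (m₀ : Fin n → ℤ) :
    ∫⁻ x in dyadicCube n u m₀, φ (idx v x) * aQ h v (idx v x) =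
      ∫⁻ x in dyadicCube n u m₀, φ (idx v x) * h x := by
  rw [lintegral_eq_tsum_cube v _ (measurableSet_cube u m₀),
    lintegral_eq_tsum_cube v _ (measurableSet_cube u m₀)]
  refine tsum_congr fun m => ?_
  rcases Set.eq_empty_or_nonempty (dyadicCube n v m ∩ dyadicCube n u m₀) with he | ⟨y, hy1, hy2⟩
  · rw [he]; simp
  · have hsub : dyadicCube n v m ∩ dyadicCube n u m₀ = dyadicCube n v m := by
      refine Set.inter_eq_left.2 fun x hx => ?_
      rw [mem_cube_iff] at *
      rw [← hy2]
      exact idx_mono huv (hx.trans hy1.symm)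
    rw [hsub]
    have e1 : ∫⁻ x in dyadicCube n v m, φ (idx v x) * aQ h v (idx v x) =
        ∫⁻ x in dyadicCube n v m, φ m * aQ h v m := by
      refine setLIntegral_congr_fun (measurableSet_cube v m) fun x hx => ?_
      rw [mem_cube_iff] at hx
      simp only [hx]
    have e2 : ∫⁻ x in dyadicCube n v m, φ (idx v x) * h x =
        ∫⁻ x in dyadicCube n v m, φ m * h x := by
      refine setLIntegral_congr_fun (measurableSet_cube v m) fun x hx => ?_
      rw [mem_cube_iff] at hx
      simp only [hx]
    rw [e1, e2, setLIntegral_const, lintegral_const_mul _ hh, mul_assoc, aQ_mul]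

lemma factor_identity {w0 w1 t τ θ q q₀ q₁ : ℝ} (hw0 : 0 < w0) (hw1 : 0 < w1) (ht : 0 < t)
    (hτ : 0 < τ) (hθ : 0 < 1 - θ) (hq : 0 < q) (hq₀ : 0 < q₀) (hq₁ : 0 < q₁)
    (h : (1 - θ) * q / q₀ + θ * q / q₁ = 1) :
    (w0⁻¹ * ((w0 ^ (1 - θ) * w1 ^ θ * t) ^ q * τ ^ (-(θ * q₀ / (q₁ * (1 - θ))))) ^ (1 / q₀)) ^
        (1 - θ) *
      (w1⁻¹ * ((w0 ^ (1 - θ) * w1 ^ θ * t) ^ q * τ) ^ (1 / q₁)) ^ θ = t := by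
  obtain ⟨a, rfl⟩ : ∃ a, Real.exp a = w0 := ⟨_, Real.exp_log hw0⟩
  obtain ⟨b, rfl⟩ : ∃ a, Real.exp a = w1 := ⟨_, Real.exp_log hw1⟩
  obtain ⟨c, rfl⟩ : ∃ a, Real.exp a = t := ⟨_, Real.exp_log ht⟩
  obtain ⟨d, rfl⟩ : ∃ a, Real.exp a = τ := ⟨_, Real.exp_log hτ⟩
  simp only [← Real.exp_mul, ← Real.exp_add, ← Real.exp_neg]
  congr 1
  have e : (θ * q₀ / (q₁ * (1 - θ))) * (1 / q₀) * (1 - θ) = θ / q₁ := by field_simp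
  have h2 : (1 - θ) * q * (1 / q₀) + θ * q * (1 / q₁) = 1 := by linear_combination h
  linear_combination (a * (1 - θ) + b * θ + c) * h2 - d * e

lemma upper {n : ℕ} {θ q₀ q₁ q : ℝ} (hθ : θ ∈ Set.Ioo (0 : ℝ) 1) (hq₀ : 0 < q₀) (hq₁ : 0 < q₁)
    (hq0 : 0 < q) (hq : (1 - θ) * q / q₀ + θ * q / q₁ = 1)
    {p₀ α₀ α₁ p α : En n → ℝ} {cp c0 c1 B : ℝ} (hp₀ : GlobLogHolder cp p₀)
    (hp₀b : ∀ x, 1 ≤ p₀ x ∧ p₀ x ≤ B)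
    (hα₀ : LocLogHolder c0 α₀) (hα₁ : LocLogHolder c1 α₁)
    (hp : ∀ x, p x = p₀ x / (1 - θ))
    (hα : ∀ x, α x = (1 - θ) * α₀ x + θ * α₁ x) :
    ∃ D : ℝ, 0 < D ∧ ∀ (lam : ℕ → (Fin n → ℤ) → ℂ), modl α p q lam ≤ 1 →
      ∃ μ ν : ℕ → (Fin n → ℤ) → ℂ, seqNorm α₀ p₀ (fun _ => q₀) μ ≤ 1 ∧ seqNormInf α₁ q₁ ν ≤ 1 ∧
      (∀ v m, ‖lam v m‖ ≤ D * ‖μ v m‖ ^ (1 - θ) * ‖ν v m‖ ^ θ) := by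
  have ht0 := hθ.1
  have ht1 : 0 < 1 - θ := sub_pos.2 hθ.2
  obtain ⟨C, hC, hcomp⟩ := (hα₀.combo hα₁ hθ hα).wt_comp
  obtain ⟨C0, hC0, hcomp0⟩ := hα₀.wt_comp
  obtain ⟨C1, hC1, hcomp1⟩ := hα₁.wt_comp
  have hB : 1 ≤ B := (hp₀b 0).1.trans (hp₀b 0).2
  set A := θ * q₀ / (q₁ * (1 - θ)) with hA
  have hA0 : 0 ≤ A := by positivity
  have hAq : (A + 1) * (1 / q₀) = 1 / ((1 - θ) * q) := by
    have e1 : (A + 1) * (1 / q₀) = (1 / ((1 - θ) * q)) *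
        ((1 - θ) * q / q₀ + θ * q / q₁) := by
      rw [hA]; field_simp; ring
    rw [e1, hq, mul_one]
  set Z := C ^ q with hZ
  have hZ1 : 1 ≤ Z := Real.one_le_rpow hC hq0.le
  set Z0 := C0 ^ q₀ with hZ0
  have hZ01 : 1 ≤ Z0 := Real.one_le_rpow hC0 hq₀.le
  have hk : 0 < 1 / ((1 - θ) * q) := by positivity
  have hk0 : 0 < 1 / q₀ := by positivity
  set S := 1 / ((1 - θ) * q) * B with hS
  set S0 := 1 / q₀ * B with hS0
  have hSpos : 0 ≤ S := by positivity
  have hS0pos : 0 ≤ S0 := by positivity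
  have hse : ∀ x, p x / q = 1 / ((1 - θ) * q) * p₀ x := fun x => by rw [hp]; field_simp
  have hsb : ∀ x, 0 < p x / q ∧ p x / q ≤ S := fun x => by
    rw [hse]
    exact ⟨mul_pos hk (by linarith [(hp₀b x).1]), mul_le_mul_of_nonneg_left (hp₀b x).2 hk.le⟩
  have hsb0 : ∀ x, 1 / q₀ ≤ 1 / q₀ * p₀ x ∧ 1 / q₀ * p₀ x ≤ S0 := fun x =>
    ⟨le_mul_of_one_le_right hk0.le (hp₀b x).1, mul_le_mul_of_nonneg_left (hp₀b x).2 hk0.le⟩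
  have h2A : (1 : ℝ) ≤ 2 ^ A := Real.one_le_rpow (by norm_num) hA0
  obtain ⟨D', hD', hcore⟩ := core (hp₀.smul hk0) hk0 hsb0 (((2 : ℝ) ^ A) ^ S0 * Z ^ S)
  set Cm := Z0 ^ S0 * D' with hCm
  have hCm1 : 1 ≤ Cm := one_le_mul_of_one_le_of_one_le (Real.one_le_rpow hZ01 hS0pos) hD'
  have hCm0 : 0 < Cm := by linarith
  have hC10 : 0 < C1 := by linarith
  refine ⟨Cm ^ (1 - θ) * C1 ^ θ, by positivity, fun lam hlam => ?_⟩
  set b : ℕ → (Fin n → ℤ) → ℝ := fun v m => (wt α v m * ‖lam v m‖) ^ q with hb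
  have hbn : ∀ v m, 0 ≤ b v m := fun v m => by
    have := (wt_pos α v m).le
    positivity
  set F : En n → ℝ≥0∞ := fun x => ∑' v : ℕ, ENNReal.ofReal (b v (idx v x)) with hF
  have hFm : Measurable F := Measurable.tsum fun v =>
    measurable_bidx (fun m => ENNReal.ofReal (b v m)) v
  have hFim : Measurable fun x => (F x)⁻¹ := hFm.inv
  have hpm : Measurable p₀ := hp₀.1.continuous.measurable
  have hpqm : Measurable fun x => p x / q := by
    have : (fun x => p x / q) = fun x => 1 / ((1 - θ) * q) * p₀ x := funext hse
    rw [this]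
    exact hpm.const_mul _
  have hFint : ∫⁻ x, F x ^ (p x / q) ≤ ENNReal.ofReal (Z ^ S) := by
    calc ∫⁻ x, F x ^ (p x / q) ≤ ∫⁻ x, ENNReal.ofReal (Z ^ S) * GG α q lam x ^ (p x / q) := by
          refine lintegral_mono fun x => ?_
          refine rpow_const_bound hZ1 (hsb x).1.le (hsb x).2 ?_
          rw [GG, ← ENNReal.tsum_mul_left]
          exact ENNReal.tsum_le_tsum fun v => wt_down hC hq0 (hcomp v x).2 (norm_nonneg _)
      _ = ENNReal.ofReal (Z ^ S) * modl α p q lam := by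
          rw [lintegral_const_mul' _ _ ENNReal.ofReal_ne_top, modl]
      _ ≤ ENNReal.ofReal (Z ^ S) * 1 := by gcongr
      _ = _ := mul_one _
  have hFfin : ∀ᵐ x, F x < ∞ := by
    have := ae_lt_top (hFm.pow hpqm) (ne_top_of_le_ne_top ENNReal.ofReal_ne_top hFint)
    filter_upwards [this] with x hx
    by_contra hcon
    rw [not_lt_top_iff] at hcon
    rw [hcon, ENNReal.top_rpow_of_pos (hsb x).1] at hx
    exact lt_irrefl _ hx
  set H : En n → ℝ≥0∞ := fun x => (F x)⁻¹ with hH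
  have haQ0 : ∀ (v : ℤ) m, aQ H v m ≠ 0 := by
    intro v m h0
    have hi : ∫⁻ x in dyadicCube n v m, H x = 0 := by rw [← aQ_mul, h0, zero_mul]
    rw [lintegral_eq_zero_iff hFim] at hi
    have hf2 := ae_restrict_of_ae (s := dyadicCube n v m) hFfin
    have : ∀ᵐ x ∂(volume.restrict (dyadicCube n v m)), False := by
      filter_upwards [hi, hf2] with x hx1 hx2
      have : (F x)⁻¹ = 0 := hx1
      rw [ENNReal.inv_eq_zero] at this
      exact hx2.ne this
    rw [Filter.eventually_false_iff_eq_bot, ae_eq_bot, Measure.restrict_eq_zero] at this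
    exact vol_cube_ne_zero v m this
  have haQt : ∀ (v : ℕ) m, 0 < b v m → aQ H v m ≠ ∞ := by
    intro v m hbpos
    have : ∫⁻ x in dyadicCube n v m, H x ≤
        ∫⁻ x in dyadicCube n v m, (ENNReal.ofReal (b v m))⁻¹ := by
      refine setLIntegral_mono measurable_const fun x hx => ?_
      rw [mem_cube_iff] at hx
      refine ENNReal.inv_le_inv.2 ?_
      rw [← hx]
      exact ENNReal.le_tsum (f := fun v : ℕ => ENNReal.ofReal (b v (idx v x))) v
    rw [setLIntegral_const] at this
    unfold aQ
    refine ENNReal.div_ne_top (ne_top_of_le_ne_top ?_ this) (vol_cube_ne_zero _ m)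
    refine ENNReal.mul_ne_top ?_ (vol_cube_ne_top _ m)
    simpa using hbpos
  set ta : ℕ → (Fin n → ℤ) → ℝ := fun v m => (aQ H v m).toReal with hta
  have hta0 : ∀ v m, 0 ≤ ta v m := fun v m => ENNReal.toReal_nonneg
  have htapos : ∀ v m, 0 < b v m → 0 < ta v m := fun v m h =>
    ENNReal.toReal_pos (haQ0 v m) (haQt v m h)
  set bm : ℕ → (Fin n → ℤ) → ℝ := fun v m => b v m * ta v m ^ (-A) with hbm
  have hbmn : ∀ v m, 0 ≤ bm v m := fun v m =>
    mul_nonneg (hbn v m) (Real.rpow_nonneg (hta0 v m) _)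
  have hbv : ∀ v m, 0 ≤ b v m * ta v m := fun v m => mul_nonneg (hbn v m) (hta0 v m)
  set μ' : ℕ → (Fin n → ℤ) → ℝ := fun v m => (wt α₀ v m)⁻¹ * bm v m ^ (1 / q₀) with hμ'
  set ν' : ℕ → (Fin n → ℤ) → ℝ := fun v m => (wt α₁ v m)⁻¹ * (b v m * ta v m) ^ (1 / q₁) with hν'
  have hμ'n : ∀ v m, 0 ≤ μ' v m := fun v m =>
    mul_nonneg (inv_nonneg.2 (wt_pos α₀ v m).le) (Real.rpow_nonneg (hbmn v m) _)
  have hν'n : ∀ v m, 0 ≤ ν' v m := fun v m =>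
    mul_nonneg (inv_nonneg.2 (wt_pos α₁ v m).le) (Real.rpow_nonneg (hbv v m) _)
  have hμ'q : ∀ v m, (wt α₀ v m * μ' v m) ^ q₀ = bm v m := by
    intro v m
    have := (wt_pos α₀ v m).ne'
    rw [hμ']
    dsimp only
    rw [mul_inv_cancel_left₀ this, ← Real.rpow_mul (hbmn v m), one_div_mul_cancel hq₀.ne',
      Real.rpow_one]
  have hν'q : ∀ v m, (wt α₁ v m * ν' v m) ^ q₁ = b v m * ta v m := by
    intro v m
    have := (wt_pos α₁ v m).ne'
    rw [hν']
    dsimp only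
    rw [mul_inv_cancel_left₀ this, ← Real.rpow_mul (hbv v m), one_div_mul_cancel hq₁.ne',
      Real.rpow_one]
  refine ⟨fun v m => ((μ' v m / Cm : ℝ) : ℂ), fun v m => ((ν' v m / C1 : ℝ) : ℂ), ?_, ?_, ?_⟩
  ·
    set E : ℕ → Set (En n) := fun v => {x | H x ≤ 2 * aQ H v (idx v x)} with hE
    have hEm : ∀ v, MeasurableSet (E v) := fun v =>
      measurableSet_le hFim (measurable_bidx (fun m => 2 * aQ H v m) v)
    have hdens : ∀ (v : ℕ) m,
        volume (dyadicCube n v m) ≤ 2 * volume (dyadicCube n v m ∩ E v) := by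
      intro v m
      refine (markov_cube v m hFim (aQ_mul H v m).ge).trans (le_of_eq ?_)
      congr 2
      ext x
      simp only [Set.mem_inter_iff, hE, Set.mem_ofPred_eq]
      refine and_congr_right fun hx => ?_
      rw [mem_cube_iff] at hx
      rw [hx]
    have hpt : ∀ x, ∑' v : ℕ, (E v).indicator (fun y => ENNReal.ofReal (bm v (idx v y))) x ≤
        ENNReal.ofReal ((2 : ℝ) ^ A) * F x ^ (A + 1) := by
      intro x
      calc ∑' v : ℕ, (E v).indicator (fun y => ENNReal.ofReal (bm v (idx v y))) x
          ≤ ∑' v : ℕ, ENNReal.ofReal ((2 : ℝ) ^ A) * F x ^ A * ENNReal.ofReal (b v (idx v x)) := by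
            refine ENNReal.tsum_le_tsum fun v => ?_
            by_cases hx : x ∈ E v
            · rw [Set.indicator_of_mem hx]
              have hx' : (F x)⁻¹ ≤ 2 * aQ H v (idx v x) := hx
              rcases (hbn v (idx v x)).eq_or_lt with h0 | hpos
              · have : bm v (idx v x) = 0 := by
                  rw [hbm]; dsimp only; rw [← h0, zero_mul]
                rw [this]; simp
              · have hτ := htapos v _ hpos
                have hτe : aQ H v (idx v x) = ENNReal.ofReal (ta v (idx v x)) :=
                  (ENNReal.ofReal_toReal (haQt v _ hpos)).symm
                rw [hτe] at hx'
                have h3 : (ENNReal.ofReal (ta v (idx v x)))⁻¹ ≤ 2 * F x := by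
                  have h4 := ENNReal.inv_le_iff_inv_le.1 hx'
                  rw [ENNReal.mul_inv (Or.inl (by norm_num)) (Or.inl (by norm_num))] at h4
                  calc (ENNReal.ofReal (ta v (idx v x)))⁻¹
                      = 2 * (2⁻¹ * (ENNReal.ofReal (ta v (idx v x)))⁻¹) := by
                        rw [← mul_assoc, ENNReal.mul_inv_cancel (by norm_num) (by norm_num),
                          one_mul]
                    _ ≤ _ := by gcongr
                rw [hbm]
                dsimp only
                rw [ENNReal.ofReal_mul (hbn _ _), mul_comm]
                gcongr
                rw [← ENNReal.ofReal_rpow_of_pos hτ, ENNReal.rpow_neg, ← ENNReal.inv_rpow]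
                refine (ENNReal.rpow_le_rpow h3 hA0).trans (le_of_eq ?_)
                rw [ENNReal.mul_rpow_of_nonneg _ _ hA0, ← ENNReal.ofReal_rpow_of_pos (by norm_num)]
                simp
            · rw [Set.indicator_of_notMem hx]
              exact zero_le
        _ = ENNReal.ofReal ((2 : ℝ) ^ A) * F x ^ A * F x := ENNReal.tsum_mul_left
        _ = _ := by
            rw [ENNReal.rpow_add_of_nonneg _ _ hA0 zero_le_one, ENNReal.rpow_one, mul_assoc]
    have hmain := hcore bm E hbmn hEm hdens (by
      calc ∫⁻ x, (∑' v : ℕ, (E v).indicator (fun y => ENNReal.ofReal (bm v (idx v y))) x) ^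
            (1 / q₀ * p₀ x)
          ≤ ∫⁻ x, ENNReal.ofReal (((2 : ℝ) ^ A) ^ S0) * F x ^ (p x / q) := by
            refine lintegral_mono fun x => ?_
            have := rpow_const_bound h2A (hk0.le.trans (hsb0 x).1) (hsb0 x).2 (hpt x)
            refine this.trans (le_of_eq ?_)
            rw [← ENNReal.rpow_mul, hse, ← hAq, mul_assoc]
        _ = ENNReal.ofReal (((2 : ℝ) ^ A) ^ S0) * ∫⁻ x, F x ^ (p x / q) := by
            rw [lintegral_const_mul' _ _ ENNReal.ofReal_ne_top]
        _ ≤ ENNReal.ofReal (((2 : ℝ) ^ A) ^ S0) * ENNReal.ofReal (Z ^ S) := by gcongr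
        _ = _ := by rw [← ENNReal.ofReal_mul (by positivity)])
    have hfin := seqNorm_le_of_modl (α := α₀) (p := p₀) hq₀ (fun x => (hp₀b x).1)
      (lam := fun v m => ((μ' v m / Cm : ℝ) : ℂ)) (k := 1 / Cm) (C := Cm) (by positivity) hCm1 (by
        calc modl α₀ p₀ q₀ (fun v m => ((μ' v m / Cm : ℝ) : ℂ) / ((1 / Cm : ℝ) : ℂ))
            = modl α₀ p₀ q₀ (fun v m => ((μ' v m : ℝ) : ℂ)) := by
              congr 1
              funext v m
              rw [← Complex.ofReal_div]
              congr 1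
              field_simp
          _ ≤ ∫⁻ x, ENNReal.ofReal (Z0 ^ S0) *
              (∑' v : ℕ, ENNReal.ofReal (bm v (idx v x))) ^ (1 / q₀ * p₀ x) := by
              refine lintegral_mono fun x => ?_
              have e : p₀ x / q₀ = 1 / q₀ * p₀ x := by ring
              beta_reduce
              rw [e]
              refine rpow_const_bound hZ01 (hk0.le.trans (hsb0 x).1) (hsb0 x).2 ?_
              rw [GG, ← ENNReal.tsum_mul_left]
              refine ENNReal.tsum_le_tsum fun v => ?_
              refine (wt_up hC0 hq₀ (hcomp0 v x).1 (norm_nonneg _)).trans (le_of_eq ?_)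
              rw [Complex.norm_real, Real.norm_of_nonneg (hμ'n _ _), hμ'q]
          _ ≤ ENNReal.ofReal (Z0 ^ S0) * ENNReal.ofReal D' := by
              rw [lintegral_const_mul' _ _ ENNReal.ofReal_ne_top]
              gcongr
          _ = _ := by rw [← ENNReal.ofReal_mul (by positivity)])
    refine hfin.trans (le_of_eq ?_)
    rw [mul_one_div_cancel hCm0.ne', ENNReal.ofReal_one]
  ·
    rw [seqNormInf_le_one_iff α₁ hq₁]
    intro vQ mQ
    calc (∑' v : ℕ, if vQ ≤ (v : ℤ) then ∫⁻ x in dyadicCube n vQ mQ,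
          ENNReal.ofReal ((ww α₁ v x * ‖((ν' v (idx v x) / C1 : ℝ) : ℂ)‖) ^ q₁) else 0)
        ≤ ∑' v : ℕ, ∫⁻ x in dyadicCube n vQ mQ, ENNReal.ofReal (b v (idx v x)) * H x := by
          refine ENNReal.tsum_le_tsum fun v => ?_
          split_ifs with hv
          · rw [← cond_exp_cube hFim hv (fun m => ENNReal.ofReal (b v m)) mQ]
            refine lintegral_mono fun x => ?_
            calc ENNReal.ofReal ((ww α₁ v x * ‖((ν' v (idx v x) / C1 : ℝ) : ℂ)‖) ^ q₁)
                ≤ ENNReal.ofReal ((wt α₁ v (idx v x) * ν' v (idx v x)) ^ q₁) := by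
                  have hw := ww_pos α₁ v x
                  have hn := hν'n v (idx v x)
                  refine ENNReal.ofReal_le_ofReal (Real.rpow_le_rpow (by positivity) ?_ hq₁.le)
                  rw [Complex.norm_real, Real.norm_of_nonneg (by positivity), ← mul_div_assoc,
                    div_le_iff₀ hC10]
                  calc _ ≤ C1 * wt α₁ v (idx v x) * ν' v (idx v x) :=
                        mul_le_mul_of_nonneg_right (hcomp1 v x).1 hn
                    _ = _ := by ring
              _ = ENNReal.ofReal (b v (idx v x)) * ENNReal.ofReal (ta v (idx v x)) := by
                  rw [hν'q, ENNReal.ofReal_mul (hbn _ _)]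
              _ ≤ _ := by
                  gcongr
                  exact ENNReal.ofReal_toReal_le
          · exact zero_le
      _ = ∫⁻ x in dyadicCube n vQ mQ, ∑' v : ℕ, ENNReal.ofReal (b v (idx v x)) * H x := by
          rw [lintegral_tsum]
          exact fun v => ((measurable_bidx (fun m => ENNReal.ofReal (b v m)) v).mul
            hFim).aemeasurable
      _ ≤ ∫⁻ x in dyadicCube n vQ mQ, 1 := by
          refine lintegral_mono fun x => ?_
          beta_reduce
          rw [ENNReal.tsum_mul_right]
          exact ENNReal.mul_inv_le_one (F x)
      _ = _ := by rw [setLIntegral_const, one_mul]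
  ·
    intro v m
    have hμn := hμ'n v m
    have hνn := hν'n v m
    rw [Complex.norm_real, Complex.norm_real, Real.norm_of_nonneg (by positivity),
      Real.norm_of_nonneg (by positivity), Real.div_rpow hμn hCm0.le, Real.div_rpow hνn hC10.le]
    have e : Cm ^ (1 - θ) * C1 ^ θ * (μ' v m ^ (1 - θ) / Cm ^ (1 - θ)) * (ν' v m ^ θ / C1 ^ θ) =
        μ' v m ^ (1 - θ) * ν' v m ^ θ := by
      have h1 : Cm ^ (1 - θ) ≠ 0 := (Real.rpow_pos_of_pos hCm0 _).ne'
      have h2 : C1 ^ θ ≠ 0 := (Real.rpow_pos_of_pos hC10 _).ne'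
      field_simp
    rw [e]
    rcases (norm_nonneg (lam v m)).eq_or_lt with h0 | hpos
    · rw [← h0]; positivity
    · have hbpos : 0 < b v m := by
        have := wt_pos α v m
        rw [hb]; positivity
      have hid := factor_identity (wt_pos α₀ v m) (wt_pos α₁ v m) hpos (htapos v m hbpos) ht1
        hq0 hq₀ hq₁ hq
      refine (hid.symm.trans ?_).le
      have hw : wt α v m = wt α₀ v m ^ (1 - θ) * wt α₁ v m ^ θ := ww_combo hα v (cn v m)
      rw [← hw]

/-- Theorem `calderon-prod2`: the Calderón product
`(f^{α₀(·)}_{p₀(·),q₀})^{1−θ}·(f^{α₁(·)}_{∞,q₁})^θ = f^{α(·)}_{p(·),q}`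
with equivalent norms. -/
theorem stmt11 {n : ℕ} (θ : ℝ) (hθ : θ ∈ Set.Ioo (0 : ℝ) 1)
    (q₀ q₁ q : ℝ) (hq₀ : 1 ≤ q₀) (hq₁ : 1 ≤ q₁)
    (p₀ α₀ α₁ p α : En n → ℝ)
    (hp₀ : ∃ c, GlobLogHolder c p₀)
    (hp₀b : ∃ b : ℝ, ∀ x, 1 ≤ p₀ x ∧ p₀ x ≤ b)
    (hα₀ : ∃ c, LocLogHolder c α₀) (hα₁ : ∃ c, LocLogHolder c α₁)
    (hp : ∀ x, 1 / p x = (1 - θ) / p₀ x)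
    (hq : 1 / q = (1 - θ) / q₀ + θ / q₁)
    (hα : ∀ x, α x = (1 - θ) * α₀ x + θ * α₁ x) :
    ∃ c₁ c₂ : ℝ, 0 < c₁ ∧ 0 < c₂ ∧ ∀ lam : ℕ → (Fin n → ℤ) → ℂ,
      ENNReal.ofReal c₁ * seqNorm α p (fun _ => q) lam ≤
          calderonNorm (seqNorm α₀ p₀ fun _ => q₀) (seqNormInf α₁ q₁) θ lam ∧
        calderonNorm (seqNorm α₀ p₀ fun _ => q₀) (seqNormInf α₁ q₁) θ lam ≤
          ENNReal.ofReal c₂ * seqNorm α p (fun _ => q) lam := by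
  have ht0 := hθ.1
  have ht1 : 0 < 1 - θ := sub_pos.2 hθ.2
  have hq₀' : 0 < q₀ := by linarith
  have hq₁' : 0 < q₁ := by linarith
  obtain ⟨cp, hp₀⟩ := hp₀
  obtain ⟨B, hp₀b⟩ := hp₀b
  obtain ⟨c0, hα₀⟩ := hα₀
  obtain ⟨c1, hα₁⟩ := hα₁
  have hqi : 0 < 1 / q := by rw [hq]; positivity
  have hq0 : 0 < q := one_div_pos.1 hqi
  have hqq : (1 - θ) * q / q₀ + θ * q / q₁ = 1 := by
    have : q * (1 / q) = 1 := mul_one_div_cancel hq0.ne'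
    rw [hq] at this
    linear_combination this
  have hp' : ∀ x, p x = p₀ x / (1 - θ) := by
    intro x
    rw [← one_div_one_div (p x), hp x, one_div_div]
  have hp1 : ∀ x, 1 ≤ p x := by
    intro x
    rw [hp', le_div_iff₀ ht1]
    linarith [(hp₀b x).1]
  obtain ⟨D, hD, hlow⟩ := lower hθ hq₀' hq₁' hq0 hqq hp₀ hp₀b hα₀ hα₁ hp' hα
  obtain ⟨D2, hD2, hup⟩ := upper hθ hq₀' hq₁' hq0 hqq hp₀ hp₀b hα₀ hα₁ hp' hα
  have hD0 : 0 < D := by linarith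
  refine ⟨1 / (2 * D), D2, by positivity, hD2, fun lam => ⟨?_, ?_⟩⟩
  · refine le_sInf ?_
    rintro M ⟨μ, ν, hμ, hν, hle⟩
    refine le_of_forall_gt_imp_ge_of_dense fun N hN => ?_
    rcases eq_or_ne N ∞ with rfl | hNt
    · exact le_top
    have hN0 : 0 < N.toReal := ENNReal.toReal_pos (zero_le.trans_lt hN).ne' hNt
    have hNe : N = ENNReal.ofReal N.toReal := (ENNReal.ofReal_toReal hNt).symm
    set R := N.toReal with hR
    have hmod : modl α₀ p₀ q₀ (fun v m => μ v m / ((2 : ℝ) : ℂ)) ≤ 1 := by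
      refine modl_le_one_of_lt hq₀' (fun x => by linarith [(hp₀b x).1]) (by norm_num) ?_
      rw [seqNorm_eq α₀ p₀ hq₀'] at hμ
      have hlt : luxNorm p₀ (fun x => GG α₀ q₀ μ x ^ (1 / q₀)) < ENNReal.ofReal 2 :=
        hμ.trans_lt (by simp)
      obtain ⟨c', ⟨-, h1⟩, h2⟩ := sInf_lt_iff.1 hlt
      exact ⟨c', h2.le, h1⟩
    have hreal : ∀ v m, ‖lam v m‖ ≤
        2 * R * ‖μ v m / ((2 : ℝ) : ℂ)‖ ^ (1 - θ) * ‖ν v m‖ ^ θ := by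
      intro v m
      have h1 : ENNReal.ofReal ‖lam v m‖ ≤
          ENNReal.ofReal (R * ‖μ v m‖ ^ (1 - θ) * ‖ν v m‖ ^ θ) := by
        refine (hle v m).trans ?_
        rw [ENNReal.ofReal_mul (by positivity), ENNReal.ofReal_mul (by positivity), ← hNe,
          ENNReal.ofReal_rpow_of_nonneg (norm_nonneg _) ht1.le,
          ENNReal.ofReal_rpow_of_nonneg (norm_nonneg _) ht0.le]
        gcongr
      rw [ENNReal.ofReal_le_ofReal_iff (by positivity)] at h1
      refine h1.trans ?_
      rw [norm_div, Complex.norm_real, Real.norm_of_nonneg (by norm_num),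
        Real.div_rpow (norm_nonneg _) (by norm_num)]
      have h2 : (2 : ℝ) ^ (1 - θ) ≤ 2 := by
        calc (2 : ℝ) ^ (1 - θ) ≤ 2 ^ (1 : ℝ) :=
              Real.rpow_le_rpow_of_exponent_le (by norm_num) (by linarith)
          _ = 2 := Real.rpow_one _
      have h3 : (0 : ℝ) < 2 ^ (1 - θ) := by positivity
      gcongr ?_ * _
      rw [← mul_div_assoc, le_div_iff₀ h3]
      have : 0 ≤ R * ‖μ v m‖ ^ (1 - θ) := by positivity
      nlinarith
    have hm := hlow lam _ ν (2 * R) (by positivity) hmod hν hreal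
    have hfin := seqNorm_le_of_modl hq0 hp1 (by positivity) hD hm
    calc ENNReal.ofReal (1 / (2 * D)) * seqNorm α p (fun _ => q) lam
        ≤ ENNReal.ofReal (1 / (2 * D)) * ENNReal.ofReal (D * (2 * R)) := by gcongr
      _ = N := by
          rw [← ENNReal.ofReal_mul (by positivity), hNe]
          congr 1
          field_simp
  · have hDne : ENNReal.ofReal D2 ≠ 0 := by simpa using hD2
    rw [mul_comm, ← ENNReal.div_le_iff hDne ENNReal.ofReal_ne_top, seqNorm_eq α p hq0]
    refine le_sInf ?_
    rintro c ⟨hc0, hc⟩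
    rcases eq_or_ne c ∞ with rfl | hct
    · exact le_top
    rw [ENNReal.div_le_iff hDne ENNReal.ofReal_ne_top]
    have hR0 : 0 < c.toReal := ENNReal.toReal_pos hc0.ne' hct
    have hce : c = ENNReal.ofReal c.toReal := (ENNReal.ofReal_toReal hct).symm
    have hmod := modl_le_one_of_lt (α := α) hq0 (fun x => by linarith [hp1 x]) (lam := lam) hR0
      ⟨c, hce.le, hc⟩
    obtain ⟨μ, ν, hμ, hν, hle⟩ := hup _ hmod
    refine sInf_le ⟨μ, ν, hμ, hν, fun v m => ?_⟩
    have h1 := hle v m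
    rw [norm_div, Complex.norm_real, Real.norm_of_nonneg hR0.le, div_le_iff₀ hR0] at h1
    rw [hce, ENNReal.ofReal_rpow_of_nonneg (norm_nonneg _) ht1.le,
      ENNReal.ofReal_rpow_of_nonneg (norm_nonneg _) ht0.le, ← ENNReal.ofReal_mul (by positivity),
      ← ENNReal.ofReal_mul (by positivity), ← ENNReal.ofReal_mul (by positivity)]
    refine ENNReal.ofReal_le_ofReal (h1.trans (le_of_eq (by ring)))
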